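/- Let α, β ≥ 1 and ε ∈ (0,1). There exists a constant C depending only on α, β, ε such that for every multiplicative function g : ℕ → ℝ with g(n) ≥ 0 for all n, g(p^v) ≤ α^v for all primes p and all integers v ≥ 1, and g(n) ≤ β n^{ε³/1000} for all n ≥ 1, and for all reals X, Y with 2 ≤ X^ε ≤ Y ≤ X, one has (1/Y) · ∑_{X ≤ n ≤ X+Y} g(n) ≤ C · ∏_{p ≤ X, p prime} (1 + (g(p) − 1)/p). -/

import Mathlib

open Finset

theorem shiu_mertens (q : ℕ) (hq : 1 ≤ q) :
    ∑ p ∈ q.primesBelow, Real.log p / p ≤ 2 * Real.log q := by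
  have hdvd : ∏ p ∈ q.primesBelow, p ^ (q / p) ∣ q.factorial := by
    refine (fun a b => Finset.prod_dvd_of_isRelPrime b a) ?_ ?_
    · intro p hp
      have hp' := Nat.prime_of_mem_primesBelow hp
      rw [hp'.pow_dvd_factorial_iff (Nat.lt_succ_self (Nat.log p q))]
      by_cases hlog : 1 ≤ Nat.log p q
      · calc q / p = q / p ^ 1 := by simp
          _ ≤ _ := Finset.single_le_sum (f := fun i => q / p ^ i) (fun _ _ => Nat.zero_le _) (by rw [Finset.mem_Ico]; omega)
      · have : Nat.log p q = 0 := by omega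
        rw [Nat.log_eq_zero_iff] at this
        rcases this with h | h
        · simp [Nat.div_eq_of_lt h]
        · have := hp'.two_le; omega
    · intro p hp r hr hpr
      exact Nat.coprime_iff_isRelPrime.1 (Nat.Coprime.pow _ _ ((Nat.coprime_primes (Nat.prime_of_mem_primesBelow hp) (Nat.prime_of_mem_primesBelow hr)).2 hpr))
  have hle : ∏ p ∈ q.primesBelow, p ^ (q / p) ≤ q ^ q :=
    (Nat.le_of_dvd (Nat.factorial_pos q) hdvd).trans (Nat.factorial_le_pow q)
  have hle' : (∏ p ∈ q.primesBelow, (p : ℝ) ^ (q / p)) ≤ (q : ℝ) ^ q := by exact_mod_cast hle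
  have hpos : ∀ p ∈ q.primesBelow, (0 : ℝ) < p := fun p hp =>
    by exact_mod_cast (Nat.prime_of_mem_primesBelow hp).pos
  have h2 := Real.log_le_log (Finset.prod_pos fun p hp => pow_pos (hpos p hp) _) hle'
  rw [Real.log_prod (fun p hp => (pow_pos (hpos p hp) _).ne'), Real.log_pow] at h2
  have hq0 : (0 : ℝ) < q := by exact_mod_cast hq
  have h3 : (q : ℝ) / 2 * ∑ p ∈ q.primesBelow, Real.log p / p ≤ q * Real.log q := by
    refine le_trans ?_ h2
    rw [Finset.mul_sum]
    apply Finset.sum_le_sum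
    intro p hp
    rw [Real.log_pow]
    have hp0 := hpos p hp
    have hpq := Nat.lt_of_mem_primesBelow hp
    have hlog : 0 ≤ Real.log p := Real.log_natCast_nonneg p
    have : (q : ℝ) / (2 * p) ≤ ((q / p : ℕ) : ℝ) := by
      have h4 : q ≤ 2 * p * (q / p) := by
        have h5 : 1 ≤ q / p := (Nat.one_le_div_iff (by exact_mod_cast hp0)).2 hpq.le
        have h6 := Nat.div_add_mod q p
        have h7 := Nat.mod_lt q (show p > 0 by exact_mod_cast hp0)
        nlinarith
      rw [div_le_iff₀ (by positivity)]
      have : (q : ℝ) ≤ 2 * p * (q / p : ℕ) := by exact_mod_cast h4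
      linarith
    calc (q : ℝ) / 2 * (Real.log p / p) = q / (2 * p) * Real.log p := by field_simp
      _ ≤ _ := mul_le_mul_of_nonneg_right this hlog
  have : (q : ℝ) / 2 * ∑ p ∈ q.primesBelow, Real.log p / p ≤ q / 2 * (2 * Real.log q) := by linarith
  exact le_of_mul_le_mul_left this (by positivity)

/-- Lower bound for products of `1 - 1/p` over `q ≤ p < N`. -/
theorem shiu_prodRatio (q N : ℕ) (hq : 2 ≤ q) (hN : 1 ≤ N) :
    Real.exp (-(4 * Real.log N / Real.log q)) ≤
      ∏ p ∈ N.primesBelow.filter (fun p => q ≤ p), (1 - 1 / (p : ℝ)) := by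
  have hlq : 0 < Real.log q := Real.log_pos (by exact_mod_cast hq)
  have h1 : ∀ p ∈ N.primesBelow.filter (fun p => q ≤ p),
      Real.exp (-(2 / Real.log q * (Real.log p / p))) ≤ 1 - 1 / (p : ℝ) := by
    intro p hp
    rw [Finset.mem_filter] at hp
    have hp2 : (2 : ℝ) ≤ p := by exact_mod_cast (Nat.prime_of_mem_primesBelow hp.1).two_le
    have hlp : Real.log q ≤ Real.log p := Real.log_le_log (by positivity) (by exact_mod_cast hp.2)
    have h2 : 2 / (p : ℝ) ≤ 2 / Real.log q * (Real.log p / p) := by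
      rw [div_mul_div_comm, div_le_div_iff₀ (by positivity) (by positivity)]
      nlinarith
    have h3 : Real.exp (-(2 / (p : ℝ))) ≤ 1 - 1 / p := by
      rw [Real.exp_neg, inv_le_comm₀ (Real.exp_pos _) (by rw [sub_pos, div_lt_one (by linarith)]; linarith)]
      have h4 : (1 - 1 / (p : ℝ))⁻¹ ≤ 1 + 2 / p := by
        have h5 : (0 : ℝ) < 1 - 1 / p := by rw [sub_pos, div_lt_one (by linarith)]; linarith
        rw [inv_le_iff_one_le_mul₀ h5]
        have h6 : 0 ≤ 1 / (p : ℝ) := by positivity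
        have h7 : 1 / (p : ℝ) ≤ 1 / 2 := one_div_le_one_div_of_le (by norm_num) hp2
        have h8 : 2 / (p : ℝ) = 2 * (1 / p) := by ring
        rw [h8]; nlinarith
      linarith [Real.add_one_le_exp (2 / (p : ℝ))]
    exact (Real.exp_le_exp.2 (by linarith)).trans h3
  refine le_trans ?_ (Finset.prod_le_prod (fun p _ => (Real.exp_pos _).le) h1)
  rw [← Real.exp_sum]
  apply Real.exp_le_exp.2
  rw [Finset.sum_neg_distrib, ← Finset.mul_sum, neg_le_neg_iff]
  have h3 : ∑ p ∈ N.primesBelow.filter (fun p => q ≤ p), Real.log p / p ≤ 2 * Real.log N := by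
    refine le_trans (Finset.sum_le_sum_of_subset_of_nonneg (Finset.filter_subset _ _) ?_) (shiu_mertens N hN)
    intro p _ _
    exact div_nonneg (Real.log_natCast_nonneg p) (Nat.cast_nonneg p)
  calc _ ≤ 2 / Real.log q * (2 * Real.log N) := by gcongr
    _ = _ := by ring

/-- Values on rough numbers. -/
theorem shiu_rough (α : ℝ) (hα : 1 ≤ α) (g : ℕ → ℝ) (h1 : g 1 = 1)
    (hm : ∀ m n : ℕ, Nat.Coprime m n → g (m * n) = g m * g n) (h0 : ∀ n, 0 ≤ g n)
    (hp : ∀ p : ℕ, p.Prime → ∀ v : ℕ, 1 ≤ v → g (p ^ v) ≤ α ^ v) (q : ℕ) (hq : 2 ≤ q)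
    (d : ℕ) (hd : d ≠ 0) (hr : ∀ p : ℕ, p.Prime → p ∣ d → q ≤ p) :
    g d ≤ (d : ℝ) ^ (Real.log α / Real.log q) := by
  have hlq : 0 < Real.log q := Real.log_pos (by exact_mod_cast hq)
  have hla : 0 ≤ Real.log α := Real.log_nonneg hα
  induction d using Nat.recOnPosPrimePosCoprime with
  | zero => exact absurd rfl hd
  | one => simp [h1]
  | prime_pow p n hpp hn =>
    refine (hp p hpp n hn).trans ?_
    have hqp : q ≤ p := hr p hpp (dvd_pow_self p hn.ne')
    have hq0 : (0 : ℝ) < q := by positivity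
    have hp0 : (0 : ℝ) < p := by exact_mod_cast hpp.pos
    have h2 : α ≤ (p : ℝ) ^ (Real.log α / Real.log q) := by
      rw [Real.rpow_def_of_pos hp0]
      calc α = Real.exp (Real.log α) := (Real.exp_log (by linarith)).symm
        _ ≤ _ := by
          apply Real.exp_le_exp.2
          rw [← mul_div_assoc, le_div_iff₀ hlq, mul_comm]
          gcongr
    push_cast
    rw [← Real.rpow_natCast, ← Real.rpow_natCast, ← Real.rpow_mul hp0.le, mul_comm (n : ℝ), Real.rpow_mul hp0.le]
    gcongr
  | coprime a b ha hb hab iha ihb =>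
    rw [hm a b hab]
    push_cast
    rw [Real.mul_rpow (by positivity) (by positivity)]
    exact mul_le_mul (iha (by omega) fun p hp hpa => hr p hp (hpa.mul_right b))
      (ihb (by omega) fun p hp hpa => hr p hp (hpa.mul_left a)) (h0 _) (by positivity)

theorem shiu_x (p : ℕ) (hp : 2 ≤ p) : (p : ℝ) ^ (-(3/4) : ℝ) ≤ 3 / 5 := by
  have hp0 : (2 : ℝ) ≤ p := by exact_mod_cast hp
  have h1 : ((p : ℝ) ^ (-(3/4) : ℝ)) ^ 4 ≤ (3 / 5) ^ 4 := by
    rw [← Real.rpow_natCast, ← Real.rpow_mul (by positivity)]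
    norm_num
    have h2 : (8 : ℝ) ≤ (p : ℝ) ^ 3 := by
      calc (8 : ℝ) = 2 ^ 3 := by norm_num
        _ ≤ _ := by gcongr
    calc ((p : ℝ) ^ 3)⁻¹ ≤ 8⁻¹ := inv_anti₀ (by norm_num) h2
      _ ≤ _ := by norm_num
  exact le_of_pow_le_pow_left₀ (by norm_num) (by norm_num) h1

theorem shiu_rankin (α β K : ℝ) (hα : 0 ≤ α) (hβ : 0 ≤ β) (hK : 0 ≤ K) : ∃ C : ℝ, 0 < C ∧
    ∀ g : ℕ → ℝ, g 1 = 1 → (∀ m n : ℕ, Nat.Coprime m n → g (m * n) = g m * g n) →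
      (∀ n, 0 ≤ g n) → (∀ p : ℕ, p.Prime → g p ≤ α) →
      (∀ n : ℕ, 1 ≤ n → g n ≤ β * (n : ℝ) ^ (1 / 1000 : ℝ)) →
      ∀ q : ℕ, 2 ≤ q → ∀ κ : ℝ, 0 ≤ κ → κ ≤ 1 / 5 → κ * Real.log q ≤ K →
      ∀ B : Finset ℕ, (∀ b ∈ B, b ∈ Nat.smoothNumbers q) →
      ∑ b ∈ B, g b * (b : ℝ) ^ (κ - 1) ≤ C * ∏ p ∈ q.primesBelow, (1 + g p / p) := by
  refine ⟨Real.exp (α * (K * Real.exp K) * 2 + 5 / 2 * β * ∑' n : ℕ, (n : ℝ) ^ (-(3/2) : ℝ)), Real.exp_pos _, ?_⟩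
  intro g h1 hm h0 hpα hgr q hq κ hκ0 hκ hκq B hB
  have hlq : 0 < Real.log q := Real.log_pos (by exact_mod_cast hq)
  set f : ℕ → ℝ := fun n => g n * (n : ℝ) ^ (κ - 1) with hf
  have hf1 : f 1 = 1 := by simp [hf, h1]
  have hfm : ∀ {m n : ℕ}, Nat.Coprime m n → f (m * n) = f m * f n := by
    intro m n hmn
    simp only [hf]
    rw [hm m n hmn]; push_cast
    rw [Real.mul_rpow (by positivity) (by positivity)]; ring
  have hf0 : ∀ n, 0 ≤ f n := fun n => mul_nonneg (h0 n) (by positivity)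
  have hfp : ∀ p : ℕ, p.Prime → ∀ v : ℕ, f (p ^ v) ≤ β * ((p : ℝ) ^ (-(3/4) : ℝ)) ^ v := by
    intro p hp v
    have hp1 : (1 : ℝ) ≤ p := by exact_mod_cast hp.one_lt.le
    have hpv : (1 : ℝ) ≤ (p : ℝ) ^ v := one_le_pow₀ hp1
    have h2 := hgr (p ^ v) (Nat.one_le_pow _ _ hp.pos)
    push_cast at h2
    calc f (p ^ v) ≤ (β * ((p : ℝ) ^ v) ^ (1 / 1000 : ℝ)) * ((p : ℝ) ^ v) ^ (κ - 1) := by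
          simp only [hf]; push_cast; gcongr
      _ = β * ((p : ℝ) ^ v) ^ (1 / 1000 + (κ - 1) : ℝ) := by
          rw [mul_assoc, ← Real.rpow_add (by positivity)]
      _ ≤ β * ((p : ℝ) ^ v) ^ (-(3/4) : ℝ) := by
          gcongr
          linarith
      _ = _ := by
          rw [← Real.rpow_natCast, ← Real.rpow_mul (by positivity), mul_comm (v : ℝ), Real.rpow_mul (by positivity), Real.rpow_natCast]
  have hx1 : ∀ p : ℕ, p.Prime → (p : ℝ) ^ (-(3/4) : ℝ) < 1 := fun p hp =>
    lt_of_le_of_lt (shiu_x p hp.two_le) (by norm_num)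
  have hsum : ∀ {p : ℕ}, p.Prime → Summable (fun n : ℕ ↦ ‖f (p ^ n)‖) := by
    intro p hp
    refine Summable.of_nonneg_of_le (fun _ => norm_nonneg _) (fun n => ?_)
      ((summable_geometric_of_lt_one (by positivity) (hx1 p hp)).mul_left β)
    rw [Real.norm_of_nonneg (hf0 _)]
    exact hfp p hp n
  obtain ⟨hS, hH⟩ := EulerProduct.summable_and_hasSum_smoothNumbers_prod_primesBelow_tsum hf1 hfm hsum q
  have hB1 : ∑ b ∈ B, f b ≤ ∏ p ∈ q.primesBelow, ∑' n : ℕ, f (p ^ n) := by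
    rw [← hH.tsum_eq]
    have h2 : ∑ b ∈ B, f b = ∑ b ∈ B.subtype (· ∈ Nat.smoothNumbers q), f b := by
      rw [Finset.sum_subtype_of_mem f hB]
    rw [h2]
    exact hH.summable.sum_le_tsum _ (fun b _ => hf0 b)
  have hloc : ∀ p ∈ q.primesBelow, ∑' n : ℕ, f (p ^ n) ≤
      (1 + g p / p) * Real.exp (α * (K * Real.exp K) / Real.log q * (Real.log p / p) + 5 / 2 * β * (p : ℝ) ^ (-(3/2) : ℝ)) := by
    intro p hpq
    have hp := Nat.prime_of_mem_primesBelow hpq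
    have hp1 : (1 : ℝ) < p := by exact_mod_cast hp.one_lt
    have hp0 : (0 : ℝ) < p := by linarith
    have hpq' : (p : ℝ) ≤ q := by exact_mod_cast (Nat.lt_of_mem_primesBelow hpq).le
    have hlp : 0 ≤ Real.log p := Real.log_natCast_nonneg p
    have hlpq : Real.log p ≤ Real.log q := Real.log_le_log hp0 hpq'
    have hsm : Summable (fun n : ℕ => f (p ^ n)) := (hsum hp).of_norm
    have hdec : ∑' n : ℕ, f (p ^ n) = 1 + f p + ∑' n : ℕ, f (p ^ (n + 2)) := by
      rw [← hsm.sum_add_tsum_nat_add 2]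
      simp [Finset.sum_range_succ, hf1]
    have htail : ∑' n : ℕ, f (p ^ (n + 2)) ≤ 5 / 2 * β * (p : ℝ) ^ (-(3/2) : ℝ) := by
      set x := (p : ℝ) ^ (-(3/4) : ℝ) with hx
      have hx0 : 0 ≤ x := by positivity
      have hx2 : x ^ 2 = (p : ℝ) ^ (-(3/2) : ℝ) := by
        rw [hx, ← Real.rpow_natCast, ← Real.rpow_mul hp0.le]; norm_num
      have hg := (hasSum_geometric_of_lt_one hx0 (hx1 p hp)).mul_left (β * x ^ 2)
      have h3 : ∑' n : ℕ, f (p ^ (n + 2)) ≤ β * x ^ 2 * (1 - x)⁻¹ := by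
        rw [← hg.tsum_eq]
        refine Summable.tsum_le_tsum (fun n => ?_) ((summable_nat_add_iff 2).2 hsm) hg.summable
        calc _ ≤ β * x ^ (n + 2) := hfp p hp _
          _ = _ := by ring
      refine h3.trans ?_
      have h4 : (1 - x)⁻¹ ≤ 5 / 2 := by
        have := shiu_x p hp.two_le
        rw [inv_le_comm₀ (by linarith) (by norm_num)]
        linarith
      rw [← hx2]
      calc β * x ^ 2 * (1 - x)⁻¹ ≤ β * x ^ 2 * (5 / 2) := by gcongr
        _ = _ := by ring
    have hfp1 : f p ≤ g p / p + α * (K * Real.exp K) / Real.log q * (Real.log p / p) := by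
      have h3 : (p : ℝ) ^ κ ≤ 1 + K * Real.exp K / Real.log q * Real.log p := by
        set t := κ * Real.log p with ht
        have ht0 : 0 ≤ t := by positivity
        have htK : t ≤ K := (mul_le_mul_of_nonneg_left hlpq hκ0).trans hκq
        have e1 : (p : ℝ) ^ κ = Real.exp t := by rw [Real.rpow_def_of_pos hp0, ht, mul_comm]
        have e2 : Real.exp t ≤ 1 + t * Real.exp t := by
          have := Real.add_one_le_exp (-t)
          have h5 : Real.exp (-t) * Real.exp t = 1 := by rw [← Real.exp_add]; simp
          nlinarith [Real.exp_pos t]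
        have e3 : t ≤ K / Real.log q * Real.log p := by
          rw [ht]; gcongr; rw [le_div_iff₀ hlq]; exact hκq
        rw [e1]
        calc Real.exp t ≤ 1 + t * Real.exp t := e2
          _ ≤ 1 + (K / Real.log q * Real.log p) * Real.exp K := by gcongr
          _ = _ := by ring
      have h4 : f p = g p / p * (p : ℝ) ^ κ := by
        simp only [hf]
        rw [Real.rpow_sub hp0, Real.rpow_one]; ring
      rw [h4]
      have h6 : 0 ≤ K * Real.exp K / Real.log q * Real.log p := by positivity
      calc g p / p * (p : ℝ) ^ κ ≤ g p / p * (1 + K * Real.exp K / Real.log q * Real.log p) := by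
            have := h0 p; gcongr
        _ = g p / p + g p / p * (K * Real.exp K / Real.log q * Real.log p) := by ring
        _ ≤ g p / p + α / p * (K * Real.exp K / Real.log q * Real.log p) := by
            have := hpα p hp; gcongr
        _ = _ := by ring
    set E := α * (K * Real.exp K) / Real.log q * (Real.log p / p) + 5 / 2 * β * (p : ℝ) ^ (-(3/2) : ℝ) with hE
    have hE0 : 0 ≤ E := by positivity
    have hgp : 0 ≤ g p / p := div_nonneg (h0 p) hp0.le
    calc ∑' n : ℕ, f (p ^ n) ≤ 1 + g p / p + E := by rw [hdec]; linarith
      _ ≤ (1 + g p / p) * (1 + E) := by nlinarith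
      _ ≤ _ := by
        have := Real.add_one_le_exp E
        gcongr; linarith
  refine hB1.trans ((Finset.prod_le_prod (fun p _ => tsum_nonneg fun n => hf0 _) hloc).trans ?_)
  rw [Finset.prod_mul_distrib, mul_comm]
  have hpos : 0 ≤ ∏ p ∈ q.primesBelow, (1 + g p / p) :=
    Finset.prod_nonneg fun p _ => add_nonneg zero_le_one (div_nonneg (h0 p) (Nat.cast_nonneg p))
  refine mul_le_mul_of_nonneg_right ?_ hpos
  rw [← Real.exp_sum]
  apply Real.exp_le_exp.2
  rw [Finset.sum_add_distrib, ← Finset.mul_sum, ← Finset.mul_sum]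
  have hz : Summable (fun n : ℕ => (n : ℝ) ^ (-(3/2) : ℝ)) := Real.summable_nat_rpow.2 (by norm_num)
  have e1 : ∑ p ∈ q.primesBelow, (p : ℝ) ^ (-(3/2) : ℝ) ≤ ∑' n : ℕ, (n : ℝ) ^ (-(3/2) : ℝ) :=
    hz.sum_le_tsum _ (fun n _ => by positivity)
  have e2 : α * (K * Real.exp K) / Real.log q * ∑ p ∈ q.primesBelow, Real.log p / p ≤ α * (K * Real.exp K) * 2 := by
    calc _ ≤ α * (K * Real.exp K) / Real.log q * (2 * Real.log q) := by
          have := shiu_mertens q (by omega); gcongr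
      _ = _ := by field_simp
  have e3 : 5 / 2 * β * ∑ p ∈ q.primesBelow, (p : ℝ) ^ (-(3/2) : ℝ) ≤ 5 / 2 * β * ∑' n : ℕ, (n : ℝ) ^ (-(3/2) : ℝ) := by gcongr
  linarith

/-- Orthogonality for Selberg weights. -/
theorem shiu_orth_inner (T D' : Finset ℕ) :
    ∑ D ∈ T.powerset, (-1 : ℝ) ^ #D * ∏ p ∈ D ∩ D', (p : ℝ) =
      if T ⊆ D' then ∏ p ∈ T, (1 - (p : ℝ)) else 0 := by
  have h1 : ∀ D ∈ T.powerset, (-1 : ℝ) ^ #D * ∏ p ∈ D ∩ D', (p : ℝ) =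
      ∏ p ∈ D, (-(if p ∈ D' then (p : ℝ) else 1)) := by
    intro D _
    rw [Finset.prod_neg, Finset.prod_ite_mem]
  rw [Finset.sum_congr rfl h1, ← Finset.prod_one_add]
  split_ifs with h
  · refine Finset.prod_congr rfl fun p hp => ?_
    rw [if_pos (h hp)]; ring
  · obtain ⟨p, hp, hpD⟩ := Finset.not_subset.1 h
    refine Finset.prod_eq_zero hp ?_
    rw [if_neg hpD]; ring

noncomputable def shiuM (T T' : Finset ℕ) : ℝ :=
  ∑ D ∈ T.powerset, ∑ D' ∈ T'.powerset, (-1 : ℝ) ^ #D * (-1 : ℝ) ^ #D' * ∏ p ∈ D ∩ D', (p : ℝ)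

theorem shiuM_symm (T T' : Finset ℕ) : shiuM T T' = shiuM T' T := by
  unfold shiuM
  rw [Finset.sum_comm]
  refine Finset.sum_congr rfl fun D _ => Finset.sum_congr rfl fun D' _ => ?_
  rw [Finset.inter_comm]; ring

theorem shiuM_eq (T T' : Finset ℕ) :
    shiuM T T' = ∑ D' ∈ T'.powerset, (-1 : ℝ) ^ #D' * if T ⊆ D' then ∏ p ∈ T, (1 - (p : ℝ)) else 0 := by
  unfold shiuM
  rw [Finset.sum_comm]
  refine Finset.sum_congr rfl fun D' _ => ?_
  rw [← shiu_orth_inner, Finset.mul_sum]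
  refine Finset.sum_congr rfl fun D _ => ?_
  ring

theorem shiuM_zero (T T' : Finset ℕ) (h : ¬ T ⊆ T') : shiuM T T' = 0 := by
  rw [shiuM_eq]
  refine Finset.sum_eq_zero fun D' hD' => ?_
  rw [if_neg (fun h2 => h (h2.trans (Finset.mem_powerset.1 hD'))), mul_zero]

theorem shiuM_orth (T T' : Finset ℕ) :
    shiuM T T' = if T = T' then ∏ p ∈ T, ((p : ℝ) - 1) else 0 := by
  split_ifs with h
  · subst h
    rw [shiuM_eq, Finset.sum_eq_single_of_mem T (Finset.mem_powerset_self T)]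
    · rw [if_pos (subset_refl T), ← Finset.prod_neg]
      refine Finset.prod_congr rfl fun p _ => by ring
    · intro D hD hne
      rw [if_neg (fun h2 => hne (Finset.Subset.antisymm (Finset.mem_powerset.1 hD) h2)), mul_zero]
  · by_cases h1 : T ⊆ T'
    · rw [shiuM_symm]
      exact shiuM_zero _ _ fun h2 => h (Finset.Subset.antisymm h1 h2)
    · exact shiuM_zero _ _ h1

noncomputable def shiuF (T : Finset ℕ) (n : ℕ) : ℝ :=
  ∑ D ∈ T.powerset, (-1 : ℝ) ^ #D * (∏ p ∈ D, (p : ℝ)) * if ∀ p ∈ D, p ∣ n then 1 else 0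

theorem shiu_prod_dvd (D : Finset ℕ) (hD : ∀ p ∈ D, p.Prime) (n : ℕ) :
    (∏ p ∈ D, p) ∣ n ↔ ∀ p ∈ D, p ∣ n := by
  constructor
  · intro h p hp
    exact (Finset.dvd_prod_of_mem (fun p => p) hp).trans h
  · intro h
    refine Finset.prod_dvd_of_isRelPrime ?_ h
    intro p hp r hr hpr
    exact Nat.coprime_iff_isRelPrime.1 ((Nat.coprime_primes (hD p hp) (hD r hr)).2 hpr)

theorem shiuF_corr (I : Finset ℕ) (L : ℝ)
    (hI : ∀ m : ℕ, 1 ≤ m → |(#(I.filter (fun n => m ∣ n)) : ℝ) - L / m| ≤ 1)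
    (T T' : Finset ℕ) (hT : ∀ p ∈ T, p.Prime) (hT' : ∀ p ∈ T', p.Prime) :
    ∑ n ∈ I, shiuF T n * shiuF T' n ≤
      L * shiuM T T' + (∏ p ∈ T, (1 + (p : ℝ))) * ∏ p ∈ T', (1 + (p : ℝ)) := by
  rw [Finset.prod_one_add, Finset.prod_one_add, Finset.sum_mul_sum]
  unfold shiuM shiuF
  simp_rw [Finset.sum_mul_sum]
  rw [Finset.sum_comm, Finset.mul_sum, ← Finset.sum_add_distrib]
  refine Finset.sum_le_sum fun D hD => ?_
  rw [Finset.sum_comm, Finset.mul_sum, ← Finset.sum_add_distrib]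
  refine Finset.sum_le_sum fun D' hD' => ?_
  rw [Finset.mem_powerset] at hD hD'
  have hprD : ∀ p ∈ D, p.Prime := fun p hp => hT p (hD hp)
  have hprD' : ∀ p ∈ D', p.Prime := fun p hp => hT' p (hD' hp)
  have hprU : ∀ p ∈ D ∪ D', p.Prime := by
    intro p hp
    rcases Finset.mem_union.1 hp with h | h
    · exact hprD p h
    · exact hprD' p h
  have hcount : ∑ n ∈ I, ((if ∀ p ∈ D, p ∣ n then (1 : ℝ) else 0) * if ∀ p ∈ D', p ∣ n then 1 else 0) =
      #(I.filter (fun n => (∏ p ∈ D ∪ D', p) ∣ n)) := by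
    rw [Finset.card_filter]
    push_cast
    refine Finset.sum_congr rfl fun n _ => ?_
    rw [ite_zero_mul_ite_zero]
    simp only [shiu_prod_dvd _ hprU, Finset.mem_union, or_imp, forall_and, mul_one]
  have hU1 : 1 ≤ ∏ p ∈ D ∪ D', p := Finset.prod_pos fun p hp => (hprU p hp).pos
  have hc := hI _ hU1
  rw [← hcount] at hc
  set c := ∑ n ∈ I, ((if ∀ p ∈ D, p ∣ n then (1 : ℝ) else 0) * if ∀ p ∈ D', p ∣ n then 1 else 0) with hcdef
  set a := ∏ p ∈ D, (p : ℝ)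
  set b := ∏ p ∈ D', (p : ℝ)
  have ha : 0 ≤ a := Finset.prod_nonneg fun p _ => Nat.cast_nonneg p
  have hb : 0 ≤ b := Finset.prod_nonneg fun p _ => Nat.cast_nonneg p
  have hab : (∏ p ∈ D ∪ D', (p : ℝ)) * ∏ p ∈ D ∩ D', (p : ℝ) = a * b := Finset.prod_union_inter
  push_cast at hc
  have hUpos : (0 : ℝ) < ∏ p ∈ D ∪ D', (p : ℝ) := Finset.prod_pos fun p hp => by exact_mod_cast (hprU p hp).pos
  set u := ∏ p ∈ D ∪ D', (p : ℝ)
  set w := ∏ p ∈ D ∩ D', (p : ℝ)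
  have hs : ∑ n ∈ I, (-1 : ℝ) ^ #D * a * (if ∀ p ∈ D, p ∣ n then 1 else 0) * ((-1 : ℝ) ^ #D' * b * if ∀ p ∈ D', p ∣ n then 1 else 0) = ((-1 : ℝ) ^ #D * (-1 : ℝ) ^ #D') * (a * b) * c := by
    rw [hcdef, Finset.mul_sum]
    refine Finset.sum_congr rfl fun n _ => by ring
  rw [hs]
  have hw : w = a * b / u := by rw [← hab]; field_simp
  rw [hw]
  have hsg : (-1 : ℝ) ^ #D * (-1 : ℝ) ^ #D' = 1 ∨ (-1 : ℝ) ^ #D * (-1 : ℝ) ^ #D' = -1 := by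
    rw [← pow_add]; exact neg_one_pow_eq_or ℝ _
  have habn : 0 ≤ a * b := mul_nonneg ha hb
  have h3 : a * b / u * L = a * b * (L / u) := by ring
  obtain ⟨hc1, hc2⟩ := abs_le.1 hc
  rcases hsg with h | h
  · rw [h]
    nlinarith
  · rw [h]
    nlinarith

/-- The Selberg sieve bound in raw form. -/
theorem shiu_selberg (I : Finset ℕ) (L : ℝ) (hL : 0 ≤ L)
    (hI : ∀ m : ℕ, 1 ≤ m → |(#(I.filter (fun n => m ∣ n)) : ℝ) - L / m| ≤ 1)
    (P : Finset ℕ) (hP : ∀ p ∈ P, p.Prime) (R : ℕ) (hR : 1 ≤ R) :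
    (#(I.filter (fun n => ∀ p ∈ P, ¬ p ∣ n)) : ℝ) ≤
      L / (∑ T ∈ P.powerset.filter (fun T => ∏ p ∈ T, p ≤ R), ∏ p ∈ T, (1 / ((p : ℝ) - 1))) + (R : ℝ) ^ 6 := by
  set F := P.powerset.filter (fun T => ∏ p ∈ T, p ≤ R) with hF
  set h : Finset ℕ → ℝ := fun T => ∏ p ∈ T, (1 / ((p : ℝ) - 1)) with hh
  set G := ∑ T ∈ F, h T with hG
  have hFP : ∀ T ∈ F, ∀ p ∈ T, p.Prime := by
    intro T hT p hp
    rw [hF, Finset.mem_filter, Finset.mem_powerset] at hT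
    exact hP p (hT.1 hp)
  have h2 : ∀ T ∈ F, ∀ p ∈ T, (2 : ℝ) ≤ p := fun T hT p hp => by exact_mod_cast (hFP T hT p hp).two_le
  have hpos : ∀ T ∈ F, 0 ≤ h T := fun T hT => Finset.prod_nonneg fun p hp => by
    have := h2 T hT p hp
    apply div_nonneg <;> linarith
  have hG1 : 1 ≤ G := by
    have : h ∅ ≤ G := Finset.single_le_sum hpos (by simp [hF, hR])
    simpa [hh] using this
  have hsum : ∑ n ∈ I, (∑ T ∈ F, h T * shiuF T n) ^ 2 ≤ L * G + (R : ℝ) ^ 6 := by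
    have e1 : ∑ n ∈ I, (∑ T ∈ F, h T * shiuF T n) ^ 2 =
        ∑ T ∈ F, ∑ T' ∈ F, h T * h T' * ∑ n ∈ I, shiuF T n * shiuF T' n := by
      simp_rw [sq, Finset.sum_mul_sum]
      rw [Finset.sum_comm]
      refine Finset.sum_congr rfl fun T _ => ?_
      rw [Finset.sum_comm]
      refine Finset.sum_congr rfl fun T' _ => ?_
      rw [Finset.mul_sum]
      refine Finset.sum_congr rfl fun n _ => by ring
    rw [e1]
    have e2 : ∑ T ∈ F, ∑ T' ∈ F, h T * h T' * ∑ n ∈ I, shiuF T n * shiuF T' n ≤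
        ∑ T ∈ F, ∑ T' ∈ F, (h T * h T' * (L * shiuM T T') + (h T * ∏ p ∈ T, (1 + (p : ℝ))) * (h T' * ∏ p ∈ T', (1 + (p : ℝ)))) := by
      refine Finset.sum_le_sum fun T hT => Finset.sum_le_sum fun T' hT' => ?_
      have := mul_le_mul_of_nonneg_left (shiuF_corr I L hI T T' (hFP T hT) (hFP T' hT')) (mul_nonneg (hpos T hT) (hpos T' hT'))
      refine this.trans (le_of_eq (by ring))
    refine e2.trans ?_
    simp_rw [Finset.sum_add_distrib]
    rw [← Finset.sum_mul_sum]
    have e3 : ∑ T ∈ F, ∑ T' ∈ F, h T * h T' * (L * shiuM T T') = L * G := by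
      rw [hG, Finset.mul_sum]
      refine Finset.sum_congr rfl fun T hT => ?_
      rw [Finset.sum_eq_single_of_mem T hT]
      · rw [shiuM_orth, if_pos rfl]
        have : h T * ∏ p ∈ T, ((p : ℝ) - 1) = 1 := by
          rw [hh, ← Finset.prod_mul_distrib]
          refine Finset.prod_eq_one fun p hp => ?_
          have := h2 T hT p hp
          rw [one_div, inv_mul_cancel₀ (by linarith)]
        calc _ = L * h T * (h T * ∏ p ∈ T, ((p : ℝ) - 1)) := by ring
          _ = _ := by rw [this, mul_one]
      · intro T' _ hne
        rw [shiuM_orth, if_neg (Ne.symm hne)]; ring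
    rw [e3]
    have e4 : ∑ T ∈ F, h T * ∏ p ∈ T, (1 + (p : ℝ)) ≤ (R : ℝ) ^ 3 := by
      have hcard : #F ≤ R := by
        have : #F ≤ #(Finset.Icc 1 R) := by
          refine Finset.card_le_card_of_injOn (fun T => ∏ p ∈ T, p) ?_ ?_
          · intro T hT
            have hT' : T ∈ F := hT
            rw [hF, Finset.mem_filter] at hT'
            simp only [Finset.coe_Icc, Set.mem_Icc]
            exact ⟨Finset.prod_pos fun p hp => (hFP T hT p hp).pos, hT'.2⟩
          · intro T hT T' hT' he
            simp only at he
            rw [← Nat.primeFactors_prod (s := T) (hFP T hT), he, Nat.primeFactors_prod (s := T') (hFP T' hT')]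
        simpa using this
      have ht : ∀ T ∈ F, h T * ∏ p ∈ T, (1 + (p : ℝ)) ≤ (R : ℝ) ^ 2 := by
        intro T hT
        have hT' : T ∈ F := hT
        rw [hF, Finset.mem_filter] at hT'
        have hR' : (∏ p ∈ T, (p : ℝ)) ≤ R := by
          have h5 : ((∏ p ∈ T, p : ℕ) : ℝ) ≤ R := Nat.cast_le.2 hT'.2
          rwa [Nat.cast_prod] at h5
        calc h T * ∏ p ∈ T, (1 + (p : ℝ)) = ∏ p ∈ T, (1 / ((p : ℝ) - 1) * (1 + (p : ℝ))) := by
              rw [hh, ← Finset.prod_mul_distrib]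
          _ ≤ ∏ p ∈ T, (p : ℝ) ^ 2 := by
              refine Finset.prod_le_prod (fun p hp => ?_) (fun p hp => ?_)
              · have := h2 T hT p hp
                apply mul_nonneg (div_nonneg _ _) <;> linarith
              · have := h2 T hT p hp
                rw [one_div, inv_mul_le_iff₀ (by linarith)]
                nlinarith
          _ = (∏ p ∈ T, (p : ℝ)) ^ 2 := Finset.prod_pow _ _ _
          _ ≤ _ := by
              have : 0 ≤ ∏ p ∈ T, (p : ℝ) := Finset.prod_nonneg fun p _ => Nat.cast_nonneg p
              gcongr
      calc _ ≤ ∑ T ∈ F, (R : ℝ) ^ 2 := Finset.sum_le_sum ht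
        _ = #F * (R : ℝ) ^ 2 := by simp
        _ ≤ R * (R : ℝ) ^ 2 := by gcongr
        _ = _ := by ring
    have e5 : 0 ≤ ∑ T ∈ F, h T * ∏ p ∈ T, (1 + (p : ℝ)) :=
      Finset.sum_nonneg fun T hT => mul_nonneg (hpos T hT) (Finset.prod_nonneg fun p _ => by positivity)
    have : (∑ T ∈ F, h T * ∏ p ∈ T, (1 + (p : ℝ))) * (∑ T ∈ F, h T * ∏ p ∈ T, (1 + (p : ℝ))) ≤ (R : ℝ) ^ 3 * (R : ℝ) ^ 3 := by gcongr
    linarith [show (R : ℝ) ^ 3 * (R : ℝ) ^ 3 = (R : ℝ) ^ 6 by ring]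
  have hlow : (#(I.filter (fun n => ∀ p ∈ P, ¬ p ∣ n)) : ℝ) * G ^ 2 ≤ ∑ n ∈ I, (∑ T ∈ F, h T * shiuF T n) ^ 2 := by
    refine le_trans ?_ (Finset.sum_le_sum_of_subset_of_nonneg (Finset.filter_subset (fun n => ∀ p ∈ P, ¬ p ∣ n) I) (fun n _ _ => sq_nonneg _))
    rw [← nsmul_eq_mul, ← Finset.sum_const]
    refine Finset.sum_le_sum fun n hn => le_of_eq ?_
    rw [Finset.mem_filter] at hn
    rw [hG]
    congr 1
    refine Finset.sum_congr rfl fun T hT => ?_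
    have : shiuF T n = 1 := by
      unfold shiuF
      rw [Finset.sum_eq_single_of_mem ∅ (Finset.empty_mem_powerset T)]
      · simp
      · intro D hD hne
        rw [if_neg, mul_zero]
        intro hall
        obtain ⟨p, hp⟩ := Finset.nonempty_iff_ne_empty.2 hne
        rw [hF, Finset.mem_filter, Finset.mem_powerset] at hT
        exact hn.2 p (hT.1 (Finset.mem_powerset.1 hD hp)) (hall p hp)
    rw [this, mul_one]
  have hfin := hlow.trans hsum
  have hR0 : (0 : ℝ) ≤ (R : ℝ) ^ 6 := by positivity
  have hG2 : 1 ≤ G ^ 2 := one_le_pow₀ hG1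
  have h3 : (L / G + (R : ℝ) ^ 6) * G ^ 2 = L * G + (R : ℝ) ^ 6 * G ^ 2 := by
    field_simp
  have h4 : (#(I.filter (fun n => ∀ p ∈ P, ¬ p ∣ n)) : ℝ) * G ^ 2 ≤ (L / G + (R : ℝ) ^ 6) * G ^ 2 := by
    rw [h3]; nlinarith
  exact le_of_mul_le_mul_right h4 (by positivity)

theorem shiu_count (u L : ℝ) (hu : 0 ≤ u) (hL : 0 ≤ L) (m : ℕ) (hm : 1 ≤ m) :
    |(#((Finset.Icc ⌈u⌉₊ ⌊u + L⌋₊).filter (fun n => m ∣ n)) : ℝ) - L / m| ≤ 1 := by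
  have hm0 : (0 : ℝ) < m := by exact_mod_cast hm
  have h1 : (Finset.Icc ⌈u⌉₊ ⌊u + L⌋₊).filter (fun n => m ∣ n) =
      (Finset.Icc ⌈u / m⌉₊ ⌊(u + L) / m⌋₊).image (fun j => m * j) := by
    ext n
    simp only [Finset.mem_filter, Finset.mem_Icc, Finset.mem_image, Nat.ceil_le]
    have e1 : ∀ j : ℕ, j ≤ ⌊(u + L) / m⌋₊ ↔ m * j ≤ ⌊u + L⌋₊ := by
      intro j
      rw [Nat.le_floor_iff (by positivity), Nat.le_floor_iff (by positivity), le_div_iff₀ hm0]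
      push_cast
      rw [mul_comm]
    constructor
    · rintro ⟨⟨h1, h2⟩, ⟨j, rfl⟩⟩
      refine ⟨j, ⟨?_, (e1 j).2 h2⟩, rfl⟩
      rw [div_le_iff₀ hm0]
      push_cast at h1
      linarith
    · rintro ⟨j, ⟨h1, h2⟩, rfl⟩
      refine ⟨⟨?_, (e1 j).1 h2⟩, dvd_mul_right _ _⟩
      rw [div_le_iff₀ hm0] at h1
      push_cast
      linarith
  rw [h1, Finset.card_image_of_injective _ (fun a b hab => Nat.eq_of_mul_eq_mul_left hm hab), Nat.card_Icc]
  have hv : u / m ≤ (u + L) / m := by gcongr; linarith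
  have hle : ⌈u / m⌉₊ ≤ ⌊(u + L) / m⌋₊ + 1 := by
    rw [Nat.ceil_le]; push_cast
    linarith [Nat.lt_floor_add_one ((u + L) / m)]
  rw [Nat.cast_sub hle]
  push_cast
  have a1 := Nat.lt_floor_add_one ((u + L) / m)
  have a2 := Nat.floor_le (show 0 ≤ (u + L) / m by positivity)
  have a3 := Nat.le_ceil (u / m)
  have a4 := Nat.ceil_lt_add_one (show 0 ≤ u / m by positivity)
  have a5 : (u + L) / m = u / m + L / m := by ring
  rw [abs_le]; constructor <;> linarith

theorem shiu_Glow (q : ℕ) (hq : 2 ≤ q) :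
    1 / 2 * ∏ p ∈ q.primesBelow, (1 - 1 / (p : ℝ))⁻¹ ≤
      ∑ T ∈ q.primesBelow.powerset.filter (fun T => ∏ p ∈ T, p ≤ q ^ 10), ∏ p ∈ T, (1 / ((p : ℝ) - 1)) := by
  have hlq : 0 < Real.log q := Real.log_pos (by exact_mod_cast hq)
  have hq0 : (0 : ℝ) < q := by positivity
  set P := q.primesBelow with hP
  have h2 : ∀ p ∈ P, (2 : ℝ) ≤ p := fun p hp => by exact_mod_cast (Nat.prime_of_mem_primesBelow hp).two_le
  have htot : ∏ p ∈ P, (1 - 1 / (p : ℝ))⁻¹ = ∑ T ∈ P.powerset, ∏ p ∈ T, (1 / ((p : ℝ) - 1)) := by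
    rw [← Finset.prod_one_add]
    refine Finset.prod_congr rfl fun p hp => ?_
    have := h2 p hp
    have h3 : (p : ℝ) - 1 ≠ 0 := by linarith
    have h4 : (p : ℝ) ≠ 0 := by linarith
    field_simp
    ring
  set κ := 1 / Real.log q with hκ
  have htail : ∑ T ∈ P.powerset.filter (fun T => ¬ ∏ p ∈ T, p ≤ q ^ 10), ∏ p ∈ T, (1 / ((p : ℝ) - 1)) ≤
      1 / 2 * ∏ p ∈ P, (1 - 1 / (p : ℝ))⁻¹ := by
    have s1 : ∀ T ∈ P.powerset.filter (fun T => ¬ ∏ p ∈ T, p ≤ q ^ 10), ∏ p ∈ T, (1 / ((p : ℝ) - 1)) ≤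
        Real.exp (-10) * ∏ p ∈ T, ((p : ℝ) ^ κ / ((p : ℝ) - 1)) := by
      intro T hT
      rw [Finset.mem_filter, Finset.mem_powerset, not_le] at hT
      have hTR : ((q : ℝ) ^ 10) ≤ ∏ p ∈ T, (p : ℝ) := by
        have h5 : ((q ^ 10 : ℕ) : ℝ) ≤ ((∏ p ∈ T, p : ℕ) : ℝ) := Nat.cast_le.2 hT.2.le
        rw [Nat.cast_prod] at h5
        push_cast at h5; exact h5
      have e1 : Real.exp 10 ≤ ∏ p ∈ T, (p : ℝ) ^ κ := by
        rw [Real.finsetProd_rpow _ _ (fun p _ => Nat.cast_nonneg p)]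
        calc Real.exp 10 = ((q : ℝ) ^ 10) ^ κ := by
              rw [Real.rpow_def_of_pos (by positivity), Real.log_pow, hκ]
              congr 1
              push_cast
              field_simp
          _ ≤ _ := by gcongr
      have e2 : ∏ p ∈ T, ((p : ℝ) ^ κ / ((p : ℝ) - 1)) = (∏ p ∈ T, (p : ℝ) ^ κ) * ∏ p ∈ T, (1 / ((p : ℝ) - 1)) := by
        rw [← Finset.prod_mul_distrib]
        refine Finset.prod_congr rfl fun p _ => by ring
      have e3 : 0 ≤ ∏ p ∈ T, (1 / ((p : ℝ) - 1)) := Finset.prod_nonneg fun p hp => by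
        have := h2 p (hT.1 hp)
        apply div_nonneg <;> linarith
      rw [e2]
      have e4 : Real.exp (-10) * Real.exp 10 = 1 := by rw [← Real.exp_add]; simp
      calc _ = (Real.exp (-10) * Real.exp 10) * ∏ p ∈ T, (1 / ((p : ℝ) - 1)) := by rw [e4, one_mul]
        _ ≤ (Real.exp (-10) * ∏ p ∈ T, (p : ℝ) ^ κ) * ∏ p ∈ T, (1 / ((p : ℝ) - 1)) := by gcongr
        _ = _ := by ring
    have hnn : ∀ p ∈ P, 0 ≤ (p : ℝ) ^ κ / ((p : ℝ) - 1) := fun p hp => by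
      have := h2 p hp
      exact div_nonneg (by positivity) (by linarith)
    have s2 : ∑ T ∈ P.powerset.filter (fun T => ¬ ∏ p ∈ T, p ≤ q ^ 10), ∏ p ∈ T, ((p : ℝ) ^ κ / ((p : ℝ) - 1)) ≤
        ∏ p ∈ P, (1 + (p : ℝ) ^ κ / ((p : ℝ) - 1)) := by
      rw [Finset.prod_one_add]
      refine Finset.sum_le_sum_of_subset_of_nonneg (Finset.filter_subset _ _) ?_
      intro T hT _
      exact Finset.prod_nonneg fun p hp => hnn p (Finset.mem_powerset.1 hT hp)
    have s3 : ∏ p ∈ P, (1 + (p : ℝ) ^ κ / ((p : ℝ) - 1)) ≤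
        ∏ p ∈ P, ((1 - 1 / (p : ℝ))⁻¹ * Real.exp (Real.exp 1 / Real.log q * (Real.log p / p))) := by
      refine Finset.prod_le_prod (fun p hp => add_nonneg zero_le_one (hnn p hp)) ?_
      intro p hp
      have hp2 := h2 p hp
      have hp0 : (0 : ℝ) < p := by linarith
      have hlp : 0 ≤ Real.log p := Real.log_natCast_nonneg p
      have hlpq : Real.log p ≤ Real.log q :=
        Real.log_le_log hp0 (by exact_mod_cast (Nat.lt_of_mem_primesBelow hp).le)
      have h3 : (p : ℝ) ^ κ ≤ 1 + Real.exp 1 / Real.log q * Real.log p := by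
        set t := κ * Real.log p with ht
        have ht0 : 0 ≤ t := by positivity
        have htK : t ≤ 1 := by
          rw [ht, hκ, div_mul_eq_mul_div, div_le_one hlq]; linarith
        have e1 : (p : ℝ) ^ κ = Real.exp t := by rw [Real.rpow_def_of_pos hp0, ht, mul_comm]
        have e2 : Real.exp t ≤ 1 + t * Real.exp t := by
          have := Real.add_one_le_exp (-t)
          have h5 : Real.exp (-t) * Real.exp t = 1 := by rw [← Real.exp_add]; simp
          nlinarith [Real.exp_pos t]
        rw [e1]
        calc Real.exp t ≤ 1 + t * Real.exp t := e2
          _ ≤ 1 + t * Real.exp 1 := by gcongr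
          _ = _ := by rw [ht, hκ]; ring
      have h4 : 1 + (p : ℝ) ^ κ / ((p : ℝ) - 1) = (1 - 1 / (p : ℝ))⁻¹ * (1 + ((p : ℝ) ^ κ - 1) / p) := by
        have h3 : (p : ℝ) - 1 ≠ 0 := by linarith
        have h4 : (p : ℝ) ≠ 0 := by linarith
        field_simp
        ring
      have h5 : (0 : ℝ) ≤ (1 - 1 / (p : ℝ))⁻¹ := by
        apply inv_nonneg.2
        rw [sub_nonneg, div_le_one hp0]; linarith
      rw [h4]
      refine mul_le_mul_of_nonneg_left ?_ h5
      have h6 : ((p : ℝ) ^ κ - 1) / p ≤ Real.exp 1 / Real.log q * (Real.log p / p) := by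
        rw [← mul_div_assoc]
        gcongr; linarith
      linarith [Real.add_one_le_exp (Real.exp 1 / Real.log q * (Real.log p / p))]
    have hVpos : 0 ≤ ∏ p ∈ P, (1 - 1 / (p : ℝ))⁻¹ := Finset.prod_nonneg fun p hp => by
      have := h2 p hp
      apply inv_nonneg.2
      rw [sub_nonneg, div_le_one (by linarith)]; linarith
    have s4 : ∏ p ∈ P, Real.exp (Real.exp 1 / Real.log q * (Real.log p / p)) ≤ Real.exp (2 * Real.exp 1) := by
      rw [← Real.exp_sum, ← Finset.mul_sum]
      apply Real.exp_le_exp.2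
      calc _ ≤ Real.exp 1 / Real.log q * (2 * Real.log q) := by
            have := shiu_mertens q (by omega); gcongr
        _ = _ := by field_simp
    have s5 : Real.exp (-10) * Real.exp (2 * Real.exp 1) ≤ 1 / 2 := by
      rw [← Real.exp_add]
      have he := Real.exp_one_lt_d9
      calc Real.exp (-10 + 2 * Real.exp 1) ≤ Real.exp (-1) := Real.exp_le_exp.2 (by linarith)
        _ ≤ 1 / 2 := by
          rw [Real.exp_neg, one_div]
          apply inv_anti₀ (by norm_num)
          linarith [Real.exp_one_gt_d9]
    calc _ ≤ ∑ T ∈ P.powerset.filter (fun T => ¬ ∏ p ∈ T, p ≤ q ^ 10), Real.exp (-10) * ∏ p ∈ T, ((p : ℝ) ^ κ / ((p : ℝ) - 1)) := Finset.sum_le_sum s1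
      _ ≤ Real.exp (-10) * ∏ p ∈ P, ((1 - 1 / (p : ℝ))⁻¹ * Real.exp (Real.exp 1 / Real.log q * (Real.log p / p))) := by
          rw [← Finset.mul_sum]
          exact mul_le_mul_of_nonneg_left (s2.trans s3) (Real.exp_pos _).le
      _ ≤ Real.exp (-10) * ((∏ p ∈ P, (1 - 1 / (p : ℝ))⁻¹) * Real.exp (2 * Real.exp 1)) := by
          rw [Finset.prod_mul_distrib]; gcongr
      _ = (Real.exp (-10) * Real.exp (2 * Real.exp 1)) * ∏ p ∈ P, (1 - 1 / (p : ℝ))⁻¹ := by ring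
      _ ≤ _ := by gcongr
  have hsplit := Finset.sum_filter_add_sum_filter_not P.powerset (fun T => ∏ p ∈ T, p ≤ q ^ 10) (fun T => ∏ p ∈ T, (1 / ((p : ℝ) - 1)))
  rw [← htot] at hsplit
  linarith

theorem shiu_prodlow_aux (n : ℕ) (hn : 1 ≤ n) :
    1 / (n : ℝ) ≤ ∏ p ∈ (n + 1).primesBelow, (1 - 1 / (p : ℝ)) := by
  induction n, hn using Nat.le_induction with
  | base =>
    have : (1 + 1 : ℕ).primesBelow = ∅ := by decide
    simp [this]
  | succ n hn ih =>
    have hn0 : (1 : ℝ) ≤ n := by exact_mod_cast hn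
    by_cases h : (n + 1).Prime
    · rw [Nat.primesBelow_succ, if_pos h, Finset.prod_insert (Nat.notMem_primesBelow (n + 1))]
      calc 1 / ((n + 1 : ℕ) : ℝ) = (1 - 1 / ((n + 1 : ℕ) : ℝ)) * (1 / n) := by
            push_cast
            field_simp
            ring
        _ ≤ _ := by
          have : (0 : ℝ) ≤ 1 - 1 / ((n + 1 : ℕ) : ℝ) := by
            push_cast
            rw [sub_nonneg, div_le_one (by linarith)]; linarith
          gcongr
    · rw [Nat.primesBelow_succ, if_neg h]
      refine le_trans ?_ ih
      push_cast
      gcongr; linarith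

theorem shiu_prodlow (q : ℕ) (hq : 2 ≤ q) : 1 / (q : ℝ) ≤ ∏ p ∈ q.primesBelow, (1 - 1 / (p : ℝ)) := by
  obtain ⟨n, rfl⟩ : ∃ n, q = n + 1 := ⟨q - 1, by omega⟩
  refine le_trans ?_ (shiu_prodlow_aux n (by omega))
  have : (1 : ℝ) ≤ n := by exact_mod_cast (show 1 ≤ n by omega)
  push_cast
  gcongr; linarith

/-- Sieve bound for a short interval. -/
theorem shiu_sieve (q : ℕ) (hq : 2 ≤ q) (X Y : ℝ) (hX : 0 ≤ X) (hY : 0 ≤ Y) (m : ℕ) (hm : 1 ≤ m)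
    (hqY : (q : ℝ) ^ 61 ≤ Y / m) (S : Finset ℕ)
    (hS : ∀ n ∈ S, X ≤ n ∧ (n : ℝ) ≤ X + Y ∧ m ∣ n ∧ ∀ p : ℕ, p.Prime → p < q → ¬ p ∣ n / m) :
    (#S : ℝ) ≤ 3 * (Y / m) * ∏ p ∈ q.primesBelow, (1 - 1 / (p : ℝ)) := by
  have hm0 : (0 : ℝ) < m := by exact_mod_cast hm
  set L := Y / m with hL
  set u := X / m with hu
  have hu0 : 0 ≤ u := by positivity
  have hL0 : 0 ≤ L := by positivity
  set I := Finset.Icc ⌈u⌉₊ ⌊u + L⌋₊ with hI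
  have hcard : #S ≤ #(I.filter (fun n => ∀ p ∈ q.primesBelow, ¬ p ∣ n)) := by
    refine Finset.card_le_card_of_injOn (fun n => n / m) ?_ ?_
    · intro n hn
      obtain ⟨h1, h2, ⟨d, rfl⟩, h4⟩ := hS n hn
      rw [Nat.mul_div_cancel_left _ hm] at h4
      simp only [Nat.mul_div_cancel_left _ hm, Finset.coe_filter, Set.mem_setOf_eq]
      push_cast at h1 h2
      refine ⟨?_, fun p hp => h4 p (Nat.prime_of_mem_primesBelow hp) (Nat.lt_of_mem_primesBelow hp)⟩
      rw [hI, Finset.mem_Icc, Nat.ceil_le, Nat.le_floor_iff (by positivity), hu, hL, ← add_div, div_le_iff₀ hm0, le_div_iff₀ hm0]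
      constructor <;> linarith
    · intro a ha b hb hab
      obtain ⟨_, _, ⟨d, rfl⟩, _⟩ := hS a ha
      obtain ⟨_, _, ⟨e, rfl⟩, _⟩ := hS b hb
      simp only [Nat.mul_div_cancel_left _ hm] at hab
      rw [hab]
  have hsel := shiu_selberg I L hL0 (fun k hk => shiu_count u L hu0 hL0 k hk) q.primesBelow
    (fun p hp => Nat.prime_of_mem_primesBelow hp) (q ^ 10) (Nat.one_le_pow _ _ (by omega))
  have hG := shiu_Glow q hq
  set G := ∑ T ∈ q.primesBelow.powerset.filter (fun T => ∏ p ∈ T, p ≤ q ^ 10), ∏ p ∈ T, (1 / ((p : ℝ) - 1))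
  have hlow := shiu_prodlow q hq
  rw [Finset.prod_inv_distrib] at hG
  set V := ∏ p ∈ q.primesBelow, (1 - 1 / (p : ℝ))
  have hq0 : (0 : ℝ) < q := by positivity
  have hV : 0 < V := lt_of_lt_of_le (by positivity) hlow
  have h1 : L / G ≤ 2 * L * V := by
    calc L / G ≤ L / (1 / 2 * V⁻¹) := by gcongr
      _ = _ := by field_simp
  have h2 : ((q ^ 10 : ℕ) : ℝ) ^ 6 ≤ L * V := by
    calc ((q ^ 10 : ℕ) : ℝ) ^ 6 = (q : ℝ) ^ 61 * (1 / q) := by push_cast; field_simp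
      _ ≤ _ := by gcongr
  have h3 : (#S : ℝ) ≤ (#(I.filter (fun n => ∀ p ∈ q.primesBelow, ¬ p ∣ n)) : ℝ) := by exact_mod_cast hcard
  linarith

def shiuA (q n : ℕ) : ℕ := ∏ p ∈ q.primesBelow, p ^ n.factorization p

theorem shiuA_pos (q n : ℕ) : 0 < shiuA q n :=
  Finset.prod_pos fun _ hp => pow_pos (Nat.prime_of_mem_primesBelow hp).pos _

theorem shiuA_zero (n : ℕ) : shiuA 0 n = 1 := by simp [shiuA, Nat.primesBelow]

theorem shiuA_succ (q n : ℕ) :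
    shiuA (q + 1) n = if q.Prime then q ^ n.factorization q * shiuA q n else shiuA q n := by
  unfold shiuA
  rw [Nat.primesBelow_succ]
  split_ifs with h
  · rw [Finset.prod_insert (Nat.notMem_primesBelow q)]
  · rfl

theorem shiuA_dvd (q n : ℕ) : shiuA q n ∣ n := by
  unfold shiuA
  refine Finset.prod_dvd_of_isRelPrime ?_ (fun p _ => Nat.ordProj_dvd n p)
  intro p hp r hr hpr
  exact Nat.coprime_iff_isRelPrime.1 (Nat.Coprime.pow _ _ ((Nat.coprime_primes (Nat.prime_of_mem_primesBelow hp) (Nat.prime_of_mem_primesBelow hr)).2 hpr))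

theorem shiuA_prime_dvd (q n p : ℕ) (hp : p.Prime) (h : p ∣ shiuA q n) : p < q := by
  unfold shiuA at h
  obtain ⟨r, hr, hpr⟩ := (hp.prime.dvd_finsetProd_iff _).1 h
  have := hp.dvd_of_dvd_pow hpr
  rw [(Nat.prime_dvd_prime_iff_eq hp (Nat.prime_of_mem_primesBelow hr)).1 this]
  exact Nat.lt_of_mem_primesBelow hr

theorem shiuA_smooth (q n : ℕ) : shiuA q n ∈ Nat.smoothNumbers q :=
  Nat.mem_smoothNumbers'.2 fun p hp h => shiuA_prime_dvd q n p hp h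

theorem shiuA_rough (q n : ℕ) (hn : n ≠ 0) (p : ℕ) (hp : p.Prime) (hpq : p < q) : ¬ p ∣ n / shiuA q n := by
  intro h
  have h1 : shiuA q n * p ∣ n := (Nat.dvd_div_iff_mul_dvd (shiuA_dvd q n)).1 h
  have h2 : p ^ n.factorization p ∣ shiuA q n :=
    Finset.dvd_prod_of_mem (fun p => p ^ n.factorization p) (Nat.mem_primesBelow.2 ⟨hpq, hp⟩)
  have h3 : p ^ (n.factorization p + 1) ∣ n := by
    rw [pow_succ]
    exact (mul_dvd_mul_right h2 p).trans h1
  exact Nat.pow_succ_factorization_not_dvd hn hp h3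

theorem shiuA_coprime (q n : ℕ) (hn : n ≠ 0) : Nat.Coprime (shiuA q n) (n / shiuA q n) :=
  Nat.coprime_of_dvd fun p hp h1 h2 => shiuA_rough q n hn p hp (shiuA_prime_dvd q n p hp h1) h2

theorem shiuA_mul_dvd (q n : ℕ) (hq : q.Prime) (h : q ∣ n) : shiuA q n * q ∣ n := by
  refine Nat.Coprime.mul_dvd_of_dvd_of_dvd ?_ (shiuA_dvd q n) h
  rw [Nat.coprime_comm, hq.coprime_iff_not_dvd]
  exact fun h2 => lt_irrefl _ (shiuA_prime_dvd q n q hq h2)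

theorem shiuA_exists (z : ℝ) (hz : 1 ≤ z) (n : ℕ) (Q : ℕ) (h : z < shiuA Q n) :
    ∃ q, q.Prime ∧ q < Q ∧ (shiuA q n : ℝ) ≤ z ∧ z < (q : ℝ) ^ n.factorization q * shiuA q n ∧ q ∣ n := by
  induction Q with
  | zero => rw [shiuA_zero] at h; norm_num at h; linarith
  | succ Q ih =>
    by_cases h1 : z < shiuA Q n
    · obtain ⟨q, a, b, c⟩ := ih h1
      exact ⟨q, a, by omega, c⟩
    · rw [shiuA_succ] at h
      split_ifs at h with hQ
      · push_cast at h
        refine ⟨Q, hQ, by omega, not_lt.1 h1, h, ?_⟩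
        by_contra h2
        rw [Nat.factorization_eq_zero_of_not_dvd h2] at h
        simp at h
        exact h1 h
      · exact absurd h h1

/-- Contribution of integers with a fixed sieving range. -/
theorem shiu_fiber (α : ℝ) (hα : 1 ≤ α) (g : ℕ → ℝ) (h1 : g 1 = 1)
    (hm : ∀ m n : ℕ, Nat.Coprime m n → g (m * n) = g m * g n) (h0 : ∀ n, 0 ≤ g n)
    (hp : ∀ p : ℕ, p.Prime → ∀ v : ℕ, 1 ≤ v → g (p ^ v) ≤ α ^ v) (q : ℕ) (hq : 2 ≤ q)
    (X Y : ℝ) (hX : 2 ≤ X) (hY : 0 ≤ Y) (hYX : Y ≤ X) (k : ℕ) (hk : 1 ≤ k) (S : Finset ℕ)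
    (hS : ∀ n ∈ S, X ≤ n ∧ (n : ℝ) ≤ X + Y ∧ shiuA q n * k ∣ n ∧ (q : ℝ) ^ 61 * (k * shiuA q n) ≤ Y) :
    ∑ n ∈ S, g n ≤ (X * X) ^ (Real.log α / Real.log q) * (3 * (Y / k) * ∏ p ∈ q.primesBelow, (1 - 1 / (p : ℝ))) *
      ∑ b ∈ S.image (shiuA q), g b / b := by
  have hlq : 0 < Real.log q := Real.log_pos (by exact_mod_cast hq)
  have hla : 0 ≤ Real.log α := Real.log_nonneg hα
  have hk0 : (0 : ℝ) < k := by exact_mod_cast hk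
  rw [← Finset.sum_fiberwise_of_maps_to (s := S) (t := S.image (shiuA q)) (g := shiuA q)
    (fun n hn => Finset.mem_image_of_mem _ hn), Finset.mul_sum]
  refine Finset.sum_le_sum fun b hb => ?_
  obtain ⟨n0, hn0, hbn0⟩ := Finset.mem_image.1 hb
  have hb0 : 0 < b := by rw [← hbn0]; exact shiuA_pos q n0
  have hb0' : (0 : ℝ) < b := by exact_mod_cast hb0
  have hg : ∀ n ∈ S.filter (fun n => shiuA q n = b), g n ≤ g b * (X * X) ^ (Real.log α / Real.log q) := by
    intro n hn
    rw [Finset.mem_filter] at hn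
    obtain ⟨hnS, rfl⟩ := hn
    obtain ⟨a1, a2, a3, a4⟩ := hS n hnS
    have hnpos : (0 : ℝ) < n := by linarith
    have hn0 : n ≠ 0 := by rintro rfl; simp at hnpos
    have e1 : n = shiuA q n * (n / shiuA q n) := (Nat.mul_div_cancel' (shiuA_dvd q n)).symm
    have e2 : g n = g (shiuA q n) * g (n / shiuA q n) := by
      conv_lhs => rw [e1]
      exact hm _ _ (shiuA_coprime q n hn0)
    rw [e2]
    have e3 : n / shiuA q n ≠ 0 := by
      intro h; rw [h] at e1; simp at e1; exact hn0 e1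
    have e4 := shiu_rough α hα g h1 hm h0 hp q hq (n / shiuA q n) e3
      (fun p hp hpd => not_lt.1 fun hlt => shiuA_rough q n hn0 p hp hlt hpd)
    have e5 : ((n / shiuA q n : ℕ) : ℝ) ≤ X * X := by
      calc ((n / shiuA q n : ℕ) : ℝ) ≤ n := by exact_mod_cast Nat.div_le_self _ _
        _ ≤ X * X := by nlinarith
    refine mul_le_mul_of_nonneg_left (e4.trans ?_) (h0 _)
    gcongr
  have hc : (#(S.filter (fun n => shiuA q n = b)) : ℝ) ≤ 3 * (Y / (b * k : ℕ)) * ∏ p ∈ q.primesBelow, (1 - 1 / (p : ℝ)) := by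
    apply shiu_sieve q hq X Y (by linarith) hY (b * k) (Nat.mul_pos hb0 hk)
    · rw [le_div_iff₀ (by positivity)]
      have := (hS n0 hn0).2.2.2
      rw [hbn0] at this
      push_cast
      rw [mul_comm (b : ℝ)]; exact this
    · intro n hn
      rw [Finset.mem_filter] at hn
      obtain ⟨hnS, rfl⟩ := hn
      obtain ⟨a1, a2, a3, a4⟩ := hS n hnS
      have hnpos : (0 : ℝ) < n := by linarith
      have hn0 : n ≠ 0 := by rintro rfl; simp at hnpos
      refine ⟨a1, a2, a3, fun p hp hpq hpd => shiuA_rough q n hn0 p hp hpq ?_⟩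
      rw [← Nat.div_div_eq_div_mul] at hpd
      refine hpd.trans (Nat.div_dvd_of_dvd ?_)
      exact (Nat.dvd_div_iff_mul_dvd (shiuA_dvd q n)).2 a3
  have hXX : 0 ≤ g b * (X * X) ^ (Real.log α / Real.log q) := mul_nonneg (h0 b) (by positivity)
  calc ∑ n ∈ S.filter (fun n => shiuA q n = b), g n ≤ #(S.filter (fun n => shiuA q n = b)) • (g b * (X * X) ^ (Real.log α / Real.log q)) :=
        Finset.sum_le_card_nsmul _ _ _ hg
    _ ≤ (3 * (Y / (b * k : ℕ)) * ∏ p ∈ q.primesBelow, (1 - 1 / (p : ℝ))) * (g b * (X * X) ^ (Real.log α / Real.log q)) := by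
        rw [nsmul_eq_mul]; gcongr
    _ = _ := by push_cast; field_simp

theorem shiu_fac_nonneg (g : ℕ → ℝ) (h0 : ∀ n, 0 ≤ g n) (p : ℕ) (hp : p.Prime) :
    0 < 1 - 1 / (p : ℝ) ∧ 1 - 1 / (p : ℝ) ≤ 1 + (g p - 1) / p := by
  have hp2 : (2 : ℝ) ≤ p := by exact_mod_cast hp.two_le
  constructor
  · rw [sub_pos, div_lt_one (by linarith)]; linarith
  · have : 0 ≤ g p / p := div_nonneg (h0 p) (by linarith)
    rw [sub_div]; linarith

theorem shiu_prodcmp (g : ℕ → ℝ) (h0 : ∀ n, 0 ≤ g n) (q : ℕ) (hq : 2 ≤ q) (X : ℝ) (hX : 2 ≤ X) (hqX : (q : ℝ) ≤ X) :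
    (∏ p ∈ q.primesBelow, (1 - 1 / (p : ℝ))) * ∏ p ∈ q.primesBelow, (1 + g p / p) ≤
      Real.exp (8 * Real.log X / Real.log q) * ∏ p ∈ (⌊X⌋₊ + 1).primesBelow, (1 + (g p - 1) / p) := by
  have hlq : 0 < Real.log q := Real.log_pos (by exact_mod_cast hq)
  rw [← Finset.prod_mul_distrib]
  have s1 : ∏ p ∈ q.primesBelow, ((1 - 1 / (p : ℝ)) * (1 + g p / p)) ≤ ∏ p ∈ q.primesBelow, (1 + (g p - 1) / p) := by
    refine Finset.prod_le_prod (fun p hp => ?_) (fun p hp => ?_)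
    · have := (shiu_fac_nonneg g h0 p (Nat.prime_of_mem_primesBelow hp)).1
      have := div_nonneg (h0 p) (Nat.cast_nonneg (α := ℝ) p)
      positivity
    · have h3 := div_nonneg (h0 p) (Nat.cast_nonneg (α := ℝ) p)
      have h4 : 0 ≤ 1 / (p : ℝ) := by positivity
      rw [sub_div]; nlinarith
  refine s1.trans ?_
  set N := ⌊X⌋₊ + 1 with hN
  have hsplit := Finset.prod_filter_mul_prod_filter_not N.primesBelow (fun p => q ≤ p) (fun p => 1 + (g p - 1) / (p : ℝ))
  have hf : N.primesBelow.filter (fun p => ¬ q ≤ p) = q.primesBelow := by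
    have hqN : q < N := by
      have : q ≤ ⌊X⌋₊ := Nat.le_floor hqX
      omega
    ext p
    simp only [Finset.mem_filter, Nat.mem_primesBelow]
    constructor
    · rintro ⟨⟨a, b⟩, c⟩; exact ⟨by omega, b⟩
    · rintro ⟨a, b⟩; exact ⟨⟨by omega, b⟩, by omega⟩
  rw [hf] at hsplit
  have s2 : Real.exp (-(8 * Real.log X / Real.log q)) ≤ ∏ p ∈ N.primesBelow.filter (fun p => q ≤ p), (1 + (g p - 1) / (p : ℝ)) := by
    have e1 := shiu_prodRatio q N hq (by omega)
    have e2 : Real.log N ≤ 2 * Real.log X := by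
      have : (N : ℝ) ≤ X ^ 2 := by
        rw [hN]; push_cast
        have := Nat.floor_le (show 0 ≤ X by linarith)
        nlinarith
      calc Real.log N ≤ Real.log (X ^ 2) := Real.log_le_log (by rw [hN]; positivity) this
        _ = _ := by rw [Real.log_pow]; norm_num
    refine le_trans ?_ (e1.trans ?_)
    · apply Real.exp_le_exp.2
      rw [neg_le_neg_iff]
      exact div_le_div_of_nonneg_right (by linarith) hlq.le
    · refine Finset.prod_le_prod (fun p hp => ?_) (fun p hp => ?_)
      · exact (shiu_fac_nonneg g h0 p (Nat.prime_of_mem_primesBelow (Finset.mem_filter.1 hp).1)).1.le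
      · exact (shiu_fac_nonneg g h0 p (Nat.prime_of_mem_primesBelow (Finset.mem_filter.1 hp).1)).2
  have s3 : 0 ≤ ∏ p ∈ q.primesBelow, (1 + (g p - 1) / (p : ℝ)) := Finset.prod_nonneg fun p hp => by
    have := shiu_fac_nonneg g h0 p (Nat.prime_of_mem_primesBelow hp)
    linarith [this.1, this.2]
  rw [← hsplit]
  have e4 : Real.exp (8 * Real.log X / Real.log q) * Real.exp (-(8 * Real.log X / Real.log q)) = 1 := by rw [← Real.exp_add]; simp
  calc _ = (Real.exp (8 * Real.log X / Real.log q) * Real.exp (-(8 * Real.log X / Real.log q))) * ∏ p ∈ q.primesBelow, (1 + (g p - 1) / (p : ℝ)) := by rw [e4, one_mul]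
    _ ≤ _ := by
      rw [mul_assoc]
      gcongr

/-- Contribution of integers with a fixed sieving range, final form. -/
theorem shiu_main (α : ℝ) (hα : 1 ≤ α) (g : ℕ → ℝ) (h1 : g 1 = 1)
    (hm : ∀ m n : ℕ, Nat.Coprime m n → g (m * n) = g m * g n) (h0 : ∀ n, 0 ≤ g n)
    (hp : ∀ p : ℕ, p.Prime → ∀ v : ℕ, 1 ≤ v → g (p ^ v) ≤ α ^ v) (q : ℕ) (hq : 2 ≤ q)
    (X Y : ℝ) (hX : 2 ≤ X) (hY : 0 ≤ Y) (hYX : Y ≤ X) (hqX : (q : ℝ) ≤ X)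
    (k : ℕ) (hk : 1 ≤ k) (S : Finset ℕ)
    (hS : ∀ n ∈ S, X ≤ n ∧ (n : ℝ) ≤ X + Y ∧ shiuA q n * k ∣ n ∧ (q : ℝ) ^ 61 * (k * shiuA q n) ≤ Y)
    (κ C Z : ℝ) (hκ : 0 ≤ κ) (hC0 : 0 ≤ C)
    (hC : ∀ B : Finset ℕ, (∀ b ∈ B, b ∈ Nat.smoothNumbers q) →
      ∑ b ∈ B, g b * (b : ℝ) ^ (κ - 1) ≤ C * ∏ p ∈ q.primesBelow, (1 + g p / p))
    (hZ : 0 < Z) (hSZ : ∀ n ∈ S, Z ≤ shiuA q n) :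
    ∑ n ∈ S, g n ≤ 3 * C * (Y / k) * Real.exp ((2 * Real.log α + 8) * Real.log X / Real.log q) * Z ^ (-κ) *
      ∏ p ∈ (⌊X⌋₊ + 1).primesBelow, (1 + (g p - 1) / p) := by
  have hlq : 0 < Real.log q := Real.log_pos (by exact_mod_cast hq)
  have s1 := shiu_fiber α hα g h1 hm h0 hp q hq X Y hX hY hYX k hk S hS
  have s2 : ∑ b ∈ S.image (shiuA q), g b / b ≤ Z ^ (-κ) * (C * ∏ p ∈ q.primesBelow, (1 + g p / p)) := by
    refine le_trans ?_ (mul_le_mul_of_nonneg_left (hC (S.image (shiuA q)) ?_) (by positivity))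
    · rw [Finset.mul_sum]
      refine Finset.sum_le_sum fun b hb => ?_
      obtain ⟨n, hn, rfl⟩ := Finset.mem_image.1 hb
      have hb0 : (0 : ℝ) < shiuA q n := by exact_mod_cast shiuA_pos q n
      set b : ℝ := (shiuA q n : ℝ)
      have h4 : 1 ≤ Z ^ (-κ) * b ^ κ := by
        rw [Real.rpow_neg hZ.le, inv_mul_eq_div, one_le_div (by positivity)]
        have := hSZ n hn
        gcongr
      have h5 : Z ^ (-κ) * (g (shiuA q n) * b ^ (κ - 1)) = (Z ^ (-κ) * b ^ κ) * (g (shiuA q n) / b) := by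
        rw [Real.rpow_sub hb0, Real.rpow_one]; ring
      rw [h5]
      exact le_mul_of_one_le_left (div_nonneg (h0 _) hb0.le) h4
    · intro b hb
      obtain ⟨n, hn, rfl⟩ := Finset.mem_image.1 hb
      exact shiuA_smooth q n
  have s3 := shiu_prodcmp g h0 q hq X hX hqX
  have e1 : (X * X) ^ (Real.log α / Real.log q) = Real.exp (2 * Real.log α * Real.log X / Real.log q) := by
    rw [Real.rpow_def_of_pos (by positivity), Real.log_mul (by linarith) (by linarith)]
    congr 1; ring
  have e2 : Real.exp ((2 * Real.log α + 8) * Real.log X / Real.log q) =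
      Real.exp (2 * Real.log α * Real.log X / Real.log q) * Real.exp (8 * Real.log X / Real.log q) := by
    rw [← Real.exp_add]; congr 1; ring
  rw [e2]
  rw [e1] at s1
  set E1 := Real.exp (2 * Real.log α * Real.log X / Real.log q)
  set E2 := Real.exp (8 * Real.log X / Real.log q)
  set V := ∏ p ∈ q.primesBelow, (1 - 1 / (p : ℝ)) with hV
  have hVn : 0 ≤ V := Finset.prod_nonneg fun p hp => (shiu_fac_nonneg g h0 p (Nat.prime_of_mem_primesBelow hp)).1.le
  have hE1 : 0 ≤ E1 := (Real.exp_pos _).le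
  calc ∑ n ∈ S, g n ≤ E1 * (3 * (Y / k) * V) * (Z ^ (-κ) * (C * ∏ p ∈ q.primesBelow, (1 + g p / p))) := by
        refine s1.trans (mul_le_mul_of_nonneg_left s2 (by positivity))
    _ = E1 * 3 * (Y / k) * Z ^ (-κ) * C * (V * ∏ p ∈ q.primesBelow, (1 + g p / p)) := by ring
    _ ≤ E1 * 3 * (Y / k) * Z ^ (-κ) * C * (E2 * ∏ p ∈ (⌊X⌋₊ + 1).primesBelow, (1 + (g p - 1) / p)) :=
        mul_le_mul_of_nonneg_left s3 (by positivity)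
    _ = _ := by ring

theorem shiu_lower (η : ℝ) (hη : 0 < η) : ∃ c : ℝ, 0 < c ∧ ∀ g : ℕ → ℝ, (∀ n, 0 ≤ g n) → ∀ X : ℝ, 2 ≤ X →
    c * X ^ (-η) ≤ ∏ p ∈ (⌊X⌋₊ + 1).primesBelow, (1 + (g p - 1) / (p : ℝ)) := by
  obtain ⟨q, hq⟩ := exists_nat_gt (Real.exp (8 / η))
  have hq2 : 2 ≤ q := by
    have : (1 : ℝ) < q := lt_trans (by rw [Real.one_lt_exp_iff]; positivity) hq
    exact_mod_cast this
  have hlq : 8 / η < Real.log q := by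
    rw [Real.lt_log_iff_exp_lt (by positivity)]; exact hq
  have hlq0 : 0 < Real.log q := lt_trans (by positivity) hlq
  refine ⟨1 / ((q : ℝ) + 1), by positivity, fun g h0 X hX => ?_⟩
  have hq0 : (0 : ℝ) < q := by positivity
  have hlow : ∏ p ∈ (⌊X⌋₊ + 1).primesBelow, (1 - 1 / (p : ℝ)) ≤ ∏ p ∈ (⌊X⌋₊ + 1).primesBelow, (1 + (g p - 1) / (p : ℝ)) := by
    refine Finset.prod_le_prod (fun p hp => ?_) (fun p hp => ?_)
    · exact (shiu_fac_nonneg g h0 p (Nat.prime_of_mem_primesBelow hp)).1.le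
    · exact (shiu_fac_nonneg g h0 p (Nat.prime_of_mem_primesBelow hp)).2
  refine le_trans ?_ hlow
  have hXη : X ^ (-η) ≤ 1 := Real.rpow_le_one_of_one_le_of_nonpos (by linarith) (by linarith)
  have hXη0 : 0 < X ^ (-η) := by positivity
  by_cases hqX : (q : ℝ) ≤ X
  · have := shiu_prodcmp (fun _ => 0) (fun _ => le_rfl) q hq2 X hX hqX
    simp only [zero_div, add_zero, Finset.prod_const_one, mul_one, zero_sub] at this
    have e : ∏ p ∈ (⌊X⌋₊ + 1).primesBelow, (1 + -1 / (p : ℝ)) = ∏ p ∈ (⌊X⌋₊ + 1).primesBelow, (1 - 1 / (p : ℝ)) := by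
      refine Finset.prod_congr rfl fun p _ => ?_
      ring
    rw [e] at this
    have h2 := (shiu_prodlow q hq2).trans this
    have h3 : Real.exp (8 * Real.log X / Real.log q) ≤ X ^ η := by
      rw [Real.rpow_def_of_pos (by linarith)]
      apply Real.exp_le_exp.2
      rw [div_le_iff₀ hlq0]
      have hlX : 0 < Real.log X := Real.log_pos (by linarith)
      have : 8 ≤ η * Real.log q := by rw [div_lt_iff₀ hη] at hlq; linarith
      nlinarith
    have h4 : 0 ≤ ∏ p ∈ (⌊X⌋₊ + 1).primesBelow, (1 - 1 / (p : ℝ)) :=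
      Finset.prod_nonneg fun p hp => (shiu_fac_nonneg g h0 p (Nat.prime_of_mem_primesBelow hp)).1.le
    have h5 : 1 / (q : ℝ) ≤ X ^ η * ∏ p ∈ (⌊X⌋₊ + 1).primesBelow, (1 - 1 / (p : ℝ)) :=
      h2.trans (mul_le_mul_of_nonneg_right h3 h4)
    have h6 : X ^ (-η) * X ^ η = 1 := by rw [← Real.rpow_add (by linarith)]; simp
    calc 1 / ((q : ℝ) + 1) * X ^ (-η) ≤ 1 / (q : ℝ) * X ^ (-η) := by gcongr; linarith
      _ ≤ (X ^ η * ∏ p ∈ (⌊X⌋₊ + 1).primesBelow, (1 - 1 / (p : ℝ))) * X ^ (-η) := by gcongr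
      _ = (X ^ (-η) * X ^ η) * ∏ p ∈ (⌊X⌋₊ + 1).primesBelow, (1 - 1 / (p : ℝ)) := by ring
      _ = _ := by rw [h6, one_mul]
  · have hfl : 2 ≤ ⌊X⌋₊ := Nat.le_floor (by exact_mod_cast hX)
    refine le_trans ?_ (shiu_prodlow (⌊X⌋₊ + 1) (by omega))
    push_cast
    have := Nat.floor_le (show 0 ≤ X by linarith)
    calc 1 / ((q : ℝ) + 1) * X ^ (-η) ≤ 1 / ((q : ℝ) + 1) * 1 := by gcongr
      _ ≤ _ := by
        rw [mul_one]
        have : (⌊X⌋₊ : ℝ) ≤ q := by linarith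
        gcongr

theorem shiu_count2 (X Y : ℝ) (hX : 0 ≤ X) (m : ℕ) (hm : 1 ≤ m) (hmY : (m : ℝ) ≤ Y) :
    (#((Icc ⌈X⌉₊ ⌊X + Y⌋₊).filter (fun n => m ∣ n)) : ℝ) ≤ 2 * Y / m := by
  have hm0 : (0 : ℝ) < m := by exact_mod_cast hm
  have := (abs_le.1 (shiu_count X Y hX (by linarith) m hm)).2
  have h1 : 1 ≤ Y / m := by rw [one_le_div hm0]; exact hmY
  have : 2 * Y / m = Y / m + Y / m := by ring
  linarith

theorem shiu_classII (X w : ℝ) (hX : 0 ≤ X) (hw : 4 ≤ w) (S : Finset ℕ) (hS : S ⊆ Icc ⌈X⌉₊ ⌊X + w ^ 200⌋₊)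
    (hS2 : ∀ n ∈ S, ∃ q : ℕ, q.Prime ∧ q < ⌊w⌋₊ ∧ w ^ 50 < (q : ℝ) ^ n.factorization q) :
    (#S : ℝ) ≤ 2 * w ^ 151 := by
  classical
  have hw0 : 0 < w := by linarith
  have hsub : S ⊆ (⌊w⌋₊.primesBelow).biUnion (fun q =>
      (Icc ⌈X⌉₊ ⌊X + w ^ 200⌋₊).filter (fun n => w ^ 50 < (q : ℝ) ^ n.factorization q)) := by
    intro n hn
    obtain ⟨q, hq, hqw, h⟩ := hS2 n hn
    replace hn := hS hn
    rw [Finset.mem_biUnion]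
    exact ⟨q, Nat.mem_primesBelow.2 ⟨hqw, hq⟩, Finset.mem_filter.2 ⟨hn, h⟩⟩
  have h1 : ∀ q ∈ ⌊w⌋₊.primesBelow, (#((Icc ⌈X⌉₊ ⌊X + w ^ 200⌋₊).filter (fun n => w ^ 50 < (q : ℝ) ^ n.factorization q)) : ℝ) ≤ 2 * w ^ 150 := by
    intro q hq
    rw [Nat.mem_primesBelow] at hq
    have hq2 : 2 ≤ q := hq.2.two_le
    have hq1 : (1 : ℝ) < q := by exact_mod_cast hq2
    have hqw : (q : ℝ) ≤ w := by
      have := Nat.floor_le hw0.le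
      have h : (q : ℝ) ≤ ⌊w⌋₊ := by exact_mod_cast hq.1.le
      linarith
    have hex : ∃ u : ℕ, w ^ 50 < (q : ℝ) ^ u := pow_unbounded_of_one_lt _ hq1
    have hu := Nat.find_spec hex
    have humin : ∀ v, w ^ 50 < (q : ℝ) ^ v → Nat.find hex ≤ v := fun v hv => Nat.find_min' hex hv
    have hup : (q : ℝ) ^ (Nat.find hex) ≤ w ^ 51 := by
      by_cases h0 : Nat.find hex = 0
      · rw [h0, pow_zero]; exact one_le_pow₀ (by linarith)
      · have := Nat.find_min hex (show Nat.find hex - 1 < Nat.find hex by omega)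
        rw [not_lt] at this
        calc (q : ℝ) ^ (Nat.find hex) = (q : ℝ) ^ (Nat.find hex - 1) * q := by
              rw [← pow_succ]; congr 1; omega
          _ ≤ w ^ 50 * w := by gcongr
          _ = _ := by ring
    set u := Nat.find hex
    have hsub2 : (Icc ⌈X⌉₊ ⌊X + w ^ 200⌋₊).filter (fun n => w ^ 50 < (q : ℝ) ^ n.factorization q) ⊆
        (Icc ⌈X⌉₊ ⌊X + w ^ 200⌋₊).filter (fun n => q ^ u ∣ n) := by
      intro n hn
      rw [Finset.mem_filter] at hn ⊢
      exact ⟨hn.1, (pow_dvd_pow q (humin _ hn.2)).trans (Nat.ordProj_dvd n q)⟩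
    have hc := shiu_count2 X (w ^ 200) hX (q ^ u) (Nat.one_le_pow _ _ (by omega)) (by
      push_cast
      exact hup.trans (pow_le_pow_right₀ (by linarith) (by norm_num)))
    push_cast at hc
    calc _ ≤ (#((Icc ⌈X⌉₊ ⌊X + w ^ 200⌋₊).filter (fun n => q ^ u ∣ n)) : ℝ) := by
          exact_mod_cast Finset.card_le_card hsub2
      _ ≤ 2 * w ^ 200 / (q : ℝ) ^ u := hc
      _ ≤ 2 * w ^ 200 / w ^ 50 := by gcongr
      _ = 2 * w ^ 150 := by field_simp
  calc _ ≤ ((#((⌊w⌋₊.primesBelow).biUnion (fun q =>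
      (Icc ⌈X⌉₊ ⌊X + w ^ 200⌋₊).filter (fun n => w ^ 50 < (q : ℝ) ^ n.factorization q))) : ℕ) : ℝ) := by
        exact_mod_cast Finset.card_le_card hsub
    _ ≤ ∑ q ∈ ⌊w⌋₊.primesBelow, (#((Icc ⌈X⌉₊ ⌊X + w ^ 200⌋₊).filter (fun n => w ^ 50 < (q : ℝ) ^ n.factorization q)) : ℝ) := by
        exact_mod_cast Finset.card_biUnion_le
    _ ≤ ∑ q ∈ ⌊w⌋₊.primesBelow, 2 * w ^ 150 := Finset.sum_le_sum h1
    _ = (#(⌊w⌋₊.primesBelow) : ℝ) * (2 * w ^ 150) := by rw [Finset.sum_const, nsmul_eq_mul]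
    _ ≤ w * (2 * w ^ 150) := by
        gcongr
        have h := Nat.floor_le hw0.le
        have : #(⌊w⌋₊.primesBelow) ≤ ⌊w⌋₊ := by
          calc _ ≤ #(Finset.range ⌊w⌋₊) := Finset.card_le_card fun p hp => by
                rw [Nat.mem_primesBelow] at hp; exact Finset.mem_range.2 hp.1
            _ = _ := Finset.card_range _
        have : (#(⌊w⌋₊.primesBelow) : ℝ) ≤ ⌊w⌋₊ := by exact_mod_cast this
        linarith
    _ = _ := by ring

theorem shiu_classIII (y : ℕ) (hy : 2 ≤ y) : ∃ C : ℝ, 0 < C ∧ ∀ X w : ℝ, 0 ≤ X → 4 ≤ w →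
    ∀ S : Finset ℕ, S ⊆ Icc ⌈X⌉₊ ⌊X + w ^ 200⌋₊ → (∀ n ∈ S, ∃ b : ℕ, b ∈ Nat.smoothNumbers y ∧ b ∣ n ∧
      w ^ 50 < (b : ℝ) ∧ (b : ℝ) ≤ w ^ 100) → (#S : ℝ) ≤ C * w ^ 190 := by
  classical
  have hly : 0 ≤ Real.log y := Real.log_natCast_nonneg y
  obtain ⟨C, hC, H⟩ := shiu_rankin 1 1 (Real.log y / 5) zero_le_one zero_le_one (by positivity)
  have H := H (fun _ => 1) rfl (fun _ _ _ => by norm_num) (fun _ => zero_le_one) (fun _ _ => le_rfl)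
    (fun n hn => by
      rw [one_mul]; exact Real.one_le_rpow (by exact_mod_cast hn) (by norm_num)) y hy (1/5) (by norm_num) le_rfl
      (by linarith)
  set P : ℝ := ∏ p ∈ y.primesBelow, (1 + 1 / (p : ℝ)) with hP
  have hP0 : 0 < P := Finset.prod_pos fun p _ => by positivity
  refine ⟨2 * (C * P), by positivity, fun X w hX hw S hS hS2 => ?_⟩
  have hw0 : 0 < w := by linarith
  set B := (Finset.range (⌊w ^ 100⌋₊ + 1)).filter (fun b => b ∈ Nat.smoothNumbers y ∧ w ^ 50 < (b : ℝ) ∧ (b : ℝ) ≤ w ^ 100) with hB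
  have hsub : S ⊆ B.biUnion (fun b =>
      (Icc ⌈X⌉₊ ⌊X + w ^ 200⌋₊).filter (fun n => b ∣ n)) := by
    intro n hn
    obtain ⟨b, hb, hbn, h⟩ := hS2 n hn
    replace hn := hS hn
    rw [Finset.mem_biUnion]
    exact ⟨b, Finset.mem_filter.2 ⟨Finset.mem_range.2 (Nat.lt_succ_of_le (Nat.le_floor h.2)), hb, h⟩, Finset.mem_filter.2 ⟨hn, hbn⟩⟩
  have h1 : ∀ b ∈ B, (#((Icc ⌈X⌉₊ ⌊X + w ^ 200⌋₊).filter (fun n => b ∣ n)) : ℝ) ≤ 2 * w ^ 190 * (1 * (b : ℝ) ^ ((1/5 : ℝ) - 1)) := by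
    intro b hb
    obtain ⟨_, _, hb1, hb2⟩ := Finset.mem_filter.1 hb
    have hb0 : (0 : ℝ) < b := lt_trans (by positivity) hb1
    have hc := shiu_count2 X (w ^ 200) hX b (by exact_mod_cast hb0) (hb2.trans (pow_le_pow_right₀ (by linarith) (by norm_num)))
    refine hc.trans ?_
    have h5 : w ^ 10 ≤ (b : ℝ) ^ (1/5 : ℝ) := by
      calc w ^ 10 = (w ^ 50) ^ (1/5 : ℝ) := by
            rw [← Real.rpow_natCast, ← Real.rpow_natCast, ← Real.rpow_mul hw0.le]; norm_num
        _ ≤ _ := by gcongr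
    rw [Real.rpow_sub hb0, Real.rpow_one, one_mul]
    calc 2 * w ^ 200 / b = 2 * w ^ 190 * (w ^ 10 / b) := by ring
      _ ≤ _ := by gcongr
  calc _ ≤ ((#(B.biUnion (fun b => (Icc ⌈X⌉₊ ⌊X + w ^ 200⌋₊).filter (fun n => b ∣ n))) : ℕ) : ℝ) := by
        exact_mod_cast Finset.card_le_card hsub
    _ ≤ ∑ b ∈ B, (#((Icc ⌈X⌉₊ ⌊X + w ^ 200⌋₊).filter (fun n => b ∣ n)) : ℝ) := by
        exact_mod_cast Finset.card_biUnion_le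
    _ ≤ ∑ b ∈ B, 2 * w ^ 190 * (1 * (b : ℝ) ^ ((1/5 : ℝ) - 1)) := Finset.sum_le_sum h1
    _ = 2 * w ^ 190 * ∑ b ∈ B, 1 * (b : ℝ) ^ ((1/5 : ℝ) - 1) := by rw [Finset.mul_sum]
    _ ≤ 2 * w ^ 190 * (C * P) := by
        gcongr
        exact H B fun b hb => (Finset.mem_filter.1 hb).2.1
    _ = _ := by ring

theorem shiu_prodnn (g : ℕ → ℝ) (h0 : ∀ n, 0 ≤ g n) (N : ℕ) : 0 ≤ ∏ p ∈ N.primesBelow, (1 + (g p - 1) / (p : ℝ)) :=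
  Finset.prod_nonneg fun p hp => by
    have := shiu_fac_nonneg g h0 p (Nat.prime_of_mem_primesBelow hp)
    linarith [this.1, this.2]

theorem shiu_memIcc (X Y : ℝ) (hXY : 0 ≤ X + Y) (n : ℕ) (hn : n ∈ Icc ⌈X⌉₊ ⌊X + Y⌋₊) : X ≤ n ∧ (n : ℝ) ≤ X + Y := by
  rw [Finset.mem_Icc] at hn
  exact ⟨Nat.ceil_le.1 hn.1, (Nat.le_floor_iff hXY).1 hn.2⟩

theorem shiu_classI (α β ε : ℝ) (hα : 1 ≤ α) (hβ : 1 ≤ β) (hε : 0 < ε) : ∃ C : ℝ, 0 < C ∧ ∀ g : ℕ → ℝ, g 1 = 1 →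
    (∀ m n : ℕ, Nat.Coprime m n → g (m * n) = g m * g n) → (∀ n, 0 ≤ g n) →
    (∀ p : ℕ, p.Prime → ∀ v : ℕ, 1 ≤ v → g (p ^ v) ≤ α ^ v) →
    (∀ n : ℕ, 1 ≤ n → g n ≤ β * (n : ℝ) ^ (1 / 1000 : ℝ)) → ∀ X w : ℝ, 2 ≤ X → 4 ≤ w → w ^ 200 ≤ X →
    ε * Real.log X ≤ 200 * Real.log w → ∀ S : Finset ℕ, S ⊆ Icc ⌈X⌉₊ ⌊X + w ^ 200⌋₊ →
    (∀ n ∈ S, (shiuA ⌊w⌋₊ n : ℝ) ≤ w ^ 100) →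
    ∑ n ∈ S, g n ≤ C * w ^ 200 * ∏ p ∈ (⌊X⌋₊ + 1).primesBelow, (1 + (g p - 1) / (p : ℝ)) := by
  obtain ⟨C, hC, H⟩ := shiu_rankin α β 0 (by linarith) (by linarith) le_rfl
  have hlα : 0 ≤ Real.log α := Real.log_nonneg hα
  refine ⟨3 * C * Real.exp ((2 * Real.log α + 8) * 400 / ε), by positivity, fun g h1 hm h0 hp hb X w hX hw hwX hl S hS hS2 => ?_⟩
  have hw0 : 0 < w := by linarith
  have hQ : 2 ≤ ⌊w⌋₊ := Nat.le_floor (by push_cast; linarith)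
  have hQw : (⌊w⌋₊ : ℝ) ≤ w := Nat.floor_le hw0.le
  have hwp : w ≤ w ^ 200 := le_self_pow₀ (by linarith) (by norm_num)
  have hlw : 0 < Real.log w := Real.log_pos (by linarith)
  have hlX : 0 < Real.log X := Real.log_pos (by linarith)
  have hlQ : Real.log w ≤ 2 * Real.log ⌊w⌋₊ := by
    have h : w ≤ (⌊w⌋₊ : ℝ) ^ 2 := by
      have := Nat.lt_floor_add_one w
      have h2 : (2 : ℝ) ≤ ⌊w⌋₊ := by exact_mod_cast hQ
      nlinarith
    calc Real.log w ≤ Real.log ((⌊w⌋₊ : ℝ) ^ 2) := Real.log_le_log hw0 h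
      _ = _ := by rw [Real.log_pow]; norm_num
  have hlQ0 : 0 < Real.log (⌊w⌋₊ : ℝ) := by linarith
  have hpp : ∀ p : ℕ, p.Prime → g p ≤ α := fun p hpr => by simpa using hp p hpr 1 le_rfl
  have M := shiu_main α hα g h1 hm h0 hp ⌊w⌋₊ hQ X (w ^ 200) hX (by positivity) hwX (by linarith) 1 le_rfl S
    (fun n hn => by
      obtain ⟨a, b⟩ := shiu_memIcc X (w ^ 200) (by positivity) n (hS hn)
      refine ⟨a, b, by rw [mul_one]; exact shiuA_dvd _ _, ?_⟩
      push_cast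
      rw [one_mul]
      calc (⌊w⌋₊ : ℝ) ^ 61 * (shiuA ⌊w⌋₊ n : ℝ) ≤ w ^ 61 * w ^ 100 := by
            have := hS2 n hn
            gcongr
        _ = w ^ 161 := by ring
        _ ≤ w ^ 200 := pow_le_pow_right₀ (by linarith) (by norm_num))
    0 C 1 le_rfl hC.le
    (H g h1 hm h0 hpp hb ⌊w⌋₊ hQ 0 le_rfl (by norm_num) (by simp)) one_pos
    (fun n hn => by exact_mod_cast shiuA_pos _ n)
  refine M.trans (mul_le_mul_of_nonneg_right ?_ (shiu_prodnn g h0 _))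
  have he : Real.exp ((2 * Real.log α + 8) * Real.log X / Real.log ⌊w⌋₊) ≤ Real.exp ((2 * Real.log α + 8) * 400 / ε) := by
    apply Real.exp_le_exp.2
    rw [div_le_div_iff₀ hlQ0 hε, mul_assoc, mul_assoc]
    apply mul_le_mul_of_nonneg_left _ (by linarith)
    linarith
  rw [Real.one_rpow, mul_one, Nat.cast_one, div_one]
  calc _ ≤ 3 * C * w ^ 200 * Real.exp ((2 * Real.log α + 8) * 400 / ε) := by gcongr
    _ = _ := by ring

theorem shiu_classIV (α β ε : ℝ) (hα : 1 ≤ α) (hβ : 1 ≤ β) (hε : 0 < ε) : ∃ C : ℝ, 0 < C ∧ ∃ y : ℕ, 2 ≤ y ∧ ∀ g : ℕ → ℝ, g 1 = 1 →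
    (∀ m n : ℕ, Nat.Coprime m n → g (m * n) = g m * g n) → (∀ n, 0 ≤ g n) →
    (∀ p : ℕ, p.Prime → ∀ v : ℕ, 1 ≤ v → g (p ^ v) ≤ α ^ v) →
    (∀ n : ℕ, 1 ≤ n → g n ≤ β * (n : ℝ) ^ (1 / 1000 : ℝ)) → ∀ X w : ℝ, 2 ≤ X → 4 ≤ w → w ^ 200 ≤ X →
    ε * Real.log X ≤ 200 * Real.log w → ∀ S : Finset ℕ, S ⊆ Icc ⌈X⌉₊ ⌊X + w ^ 200⌋₊ →
    (∀ n ∈ S, ∃ q : ℕ, q.Prime ∧ y ≤ q ∧ q < ⌊w⌋₊ ∧ w ^ 50 < (shiuA q n : ℝ) ∧ (shiuA q n : ℝ) ≤ w ^ 100 ∧ q ∣ n) →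
    ∑ n ∈ S, g n ≤ C * w ^ 200 * ∏ p ∈ (⌊X⌋₊ + 1).primesBelow, (1 + (g p - 1) / (p : ℝ)) := by
  classical
  have hlα : 0 ≤ Real.log α := Real.log_nonneg hα
  set A := 2 * Real.log α + 8 with hA
  have hA0 : 0 < A := by linarith
  set K := 4 * (A / ε + 1) with hK
  have hK0 : 0 < K := by positivity
  obtain ⟨C, hC, H⟩ := shiu_rankin α β K (by linarith) (by linarith) hK0.le
  obtain ⟨y, hy⟩ := exists_nat_gt (Real.exp (5 * K))
  refine ⟨3 * C, by positivity, y + 2, by omega, fun g h1 hm h0 hp hb X w hX hw hwX hl S hS hS2 => ?_⟩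
  have hw0 : 0 < w := by linarith
  have hQw : (⌊w⌋₊ : ℝ) ≤ w := Nat.floor_le hw0.le
  have hwp : w ≤ w ^ 200 := le_self_pow₀ (by linarith) (by norm_num)
  have hlw : 0 < Real.log w := Real.log_pos (by linarith)
  have hlX : 0 < Real.log X := Real.log_pos (by linarith)
  have hpp : ∀ p : ℕ, p.Prime → g p ≤ α := fun p hpr => by simpa using hp p hpr 1 le_rfl
  set PX := ∏ p ∈ (⌊X⌋₊ + 1).primesBelow, (1 + (g p - 1) / (p : ℝ)) with hPX
  have hPX0 : 0 ≤ PX := shiu_prodnn g h0 _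
  let R : ℕ → ℕ → Prop := fun q n => y + 2 ≤ q ∧ w ^ 50 < (shiuA q n : ℝ) ∧ (shiuA q n : ℝ) ≤ w ^ 100 ∧ q ∣ n
  have key : ∀ q ∈ ⌊w⌋₊.primesBelow, ∑ n ∈ S.filter (R q), g n ≤ 3 * C * w ^ 200 * PX / (200 * Real.log w) * (Real.log q / q) := by
    intro q hq
    rw [Nat.mem_primesBelow] at hq
    have hq2 := hq.2.two_le
    have hq0 : (0 : ℝ) < q := by positivity
    have hlq0 : 0 < Real.log q := Real.log_pos (by exact_mod_cast hq2)
    by_cases hyq : y + 2 ≤ q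
    swap
    · rw [Finset.filter_false_of_mem (fun n _ h => hyq h.1), Finset.sum_empty]
      positivity
    have hqw : (q : ℝ) ≤ w := by
      have h : (q : ℝ) ≤ ⌊w⌋₊ := by exact_mod_cast hq.1.le
      linarith
    have hlq : 5 * K ≤ Real.log q := by
      rw [Real.le_log_iff_exp_le hq0]
      have : (y : ℝ) ≤ q := by exact_mod_cast (by omega : y ≤ q)
      linarith
    have hκ0 : 0 ≤ K / Real.log q := by positivity
    have M := shiu_main α hα g h1 hm h0 hp q hq2 X (w ^ 200) hX (by positivity) hwX (by linarith) q (by omega) (S.filter (R q))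
      (fun n hn => by
        obtain ⟨hn, hR⟩ := Finset.mem_filter.1 hn
        obtain ⟨a, b⟩ := shiu_memIcc X (w ^ 200) (by positivity) n (hS hn)
        refine ⟨a, b, shiuA_mul_dvd q n hq.2 hR.2.2.2, ?_⟩
        calc (q : ℝ) ^ 61 * (q * (shiuA q n : ℝ)) ≤ w ^ 61 * (w * w ^ 100) := by
              have := hR.2.2.1
              gcongr
          _ = w ^ 162 := by ring
          _ ≤ w ^ 200 := pow_le_pow_right₀ (by linarith) (by norm_num))
      (K / Real.log q) C (w ^ 50) hκ0 hC.le
      (H g h1 hm h0 hpp hb q hq2 _ hκ0 (by rw [div_le_div_iff₀ hlq0 (by norm_num)]; linarith)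
        (by rw [div_mul_cancel₀ _ hlq0.ne'])) (by positivity)
      (fun n hn => (Finset.mem_filter.1 hn).2.2.1.le)
    refine M.trans ?_
    have he : Real.exp (A * Real.log X / Real.log q) * (w ^ 50) ^ (-(K / Real.log q)) ≤ Real.log q / (200 * Real.log w) := by
      rw [Real.rpow_def_of_pos (by positivity), ← Real.exp_add, Real.log_pow]
      have h3 : A * Real.log X / Real.log q + ((50 : ℕ) : ℝ) * Real.log w * -(K / Real.log q) ≤ -(200 * Real.log w / Real.log q) := by
        have : A * Real.log X / Real.log q + ((50 : ℕ) : ℝ) * Real.log w * -(K / Real.log q) =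
          (A * Real.log X - 50 * Real.log w * K) / Real.log q := by push_cast; ring
        rw [this, ← neg_div]
        apply div_le_div_of_nonneg_right _ hlq0.le
        rw [hK]
        have h5 : A * Real.log X ≤ A / ε * (200 * Real.log w) := by
          calc A * Real.log X = A / ε * (ε * Real.log X) := by field_simp
            _ ≤ _ := by gcongr
        linarith
      refine (Real.exp_le_exp.2 h3).trans ?_
      rw [Real.exp_neg]
      have hx : 0 < 200 * Real.log w / Real.log q := by positivity
      have h6 : 200 * Real.log w / Real.log q ≤ Real.exp (200 * Real.log w / Real.log q) := by
        linarith [Real.add_one_le_exp (200 * Real.log w / Real.log q)]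
      calc _ ≤ (200 * Real.log w / Real.log q)⁻¹ := by gcongr
        _ = _ := by rw [inv_div]
    calc 3 * C * (w ^ 200 / q) * Real.exp (A * Real.log X / Real.log q) * (w ^ 50) ^ (-(K / Real.log q)) * PX
        = 3 * C * (w ^ 200 / q) * PX * (Real.exp (A * Real.log X / Real.log q) * (w ^ 50) ^ (-(K / Real.log q))) := by ring
      _ ≤ 3 * C * (w ^ 200 / q) * PX * (Real.log q / (200 * Real.log w)) := by gcongr
      _ = _ := by ring
  have hlQ : Real.log ⌊w⌋₊ ≤ Real.log w := by
    have : 1 ≤ ⌊w⌋₊ := Nat.le_floor (by push_cast; linarith)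
    exact Real.log_le_log (by exact_mod_cast this) hQw
  calc ∑ n ∈ S, g n ≤ ∑ n ∈ S, ∑ q ∈ ⌊w⌋₊.primesBelow, if R q n then g n else 0 := by
        refine Finset.sum_le_sum fun n hn => ?_
        obtain ⟨q, hq, hyq, hqw, hR⟩ := hS2 n hn
        have hr : R q n := ⟨hyq, hR⟩
        have := Finset.single_le_sum (f := fun q => if R q n then g n else 0) (s := ⌊w⌋₊.primesBelow)
          (fun q _ => by split_ifs; exacts [h0 n, le_rfl]) (Nat.mem_primesBelow.2 ⟨hqw, hq⟩)
        simpa only [if_pos hr] using this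
    _ = ∑ q ∈ ⌊w⌋₊.primesBelow, ∑ n ∈ S.filter (R q), g n := by
        rw [Finset.sum_comm]
        exact Finset.sum_congr rfl fun q _ => (Finset.sum_filter _ _).symm
    _ ≤ ∑ q ∈ ⌊w⌋₊.primesBelow, 3 * C * w ^ 200 * PX / (200 * Real.log w) * (Real.log q / q) := Finset.sum_le_sum key
    _ = 3 * C * w ^ 200 * PX / (200 * Real.log w) * ∑ q ∈ ⌊w⌋₊.primesBelow, (Real.log q / q) := by rw [Finset.mul_sum]
    _ ≤ 3 * C * w ^ 200 * PX / (200 * Real.log w) * (200 * Real.log w) := by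
        apply mul_le_mul_of_nonneg_left _ (by positivity)
        have := shiu_mertens ⌊w⌋₊ (Nat.le_floor (by push_cast; linarith))
        linarith
    _ = 3 * C * w ^ 200 * PX := by field_simp

theorem shiu_small (β ε c : ℝ) (hβ : 1 ≤ β) (hε : 0 < ε) (hε1 : ε < 1) (hc : 0 < c) (g : ℕ → ℝ)
    (h0 : ∀ n, 0 ≤ g n) (hb : ∀ n : ℕ, 1 ≤ n → g n ≤ β * (n : ℝ) ^ (ε ^ 3 / 1000)) (X Y : ℝ)
    (hY2 : 2 ≤ Y) (hXY : X ^ ε ≤ Y) (hYX : Y ≤ X) (hY : Y ≤ 4 ^ 200)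
    (hP : c * X ^ (-(ε / 50)) ≤ ∏ p ∈ (⌊X⌋₊ + 1).primesBelow, (1 + (g p - 1) / (p : ℝ))) :
    ∑ n ∈ Icc ⌈X⌉₊ ⌊X + Y⌋₊, g n ≤
      (4 * β * (((4 : ℝ) ^ 200) ^ (1 / ε)) ^ 2 / c) * Y * ∏ p ∈ (⌊X⌋₊ + 1).primesBelow, (1 + (g p - 1) / (p : ℝ)) := by
  set PX := ∏ p ∈ (⌊X⌋₊ + 1).primesBelow, (1 + (g p - 1) / (p : ℝ))
  set X0 : ℝ := ((4 : ℝ) ^ 200) ^ (1 / ε) with hX0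
  have hX : 0 < X := by linarith
  have hXX0 : X ≤ X0 := by
    calc X = (X ^ ε) ^ (1 / ε) := by rw [← Real.rpow_mul hX.le, mul_one_div_cancel hε.ne', Real.rpow_one]
      _ ≤ _ := by
        apply Real.rpow_le_rpow (by positivity) (hXY.trans hY) (by positivity)
  have hX00 : 0 < X0 := by linarith
  have hg : ∀ n ∈ Icc ⌈X⌉₊ ⌊X + Y⌋₊, g n ≤ 2 * β * X0 := by
    intro n hn
    obtain ⟨h1, h2⟩ := shiu_memIcc X Y (by linarith) n hn
    have hn1 : (1 : ℝ) ≤ n := by linarith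
    refine (hb n (by exact_mod_cast hn1)).trans ?_
    have : (n : ℝ) ^ (ε ^ 3 / 1000) ≤ (n : ℝ) ^ (1 : ℝ) := by
      apply Real.rpow_le_rpow_of_exponent_le hn1
      have : ε ^ 3 ≤ 1 := pow_le_one₀ hε.le hε1.le
      linarith
    rw [Real.rpow_one] at this
    have h3 : (n : ℝ) ^ (ε ^ 3 / 1000) ≤ 2 * X0 := by linarith
    nlinarith
  have hcard := shiu_count2 X Y hX.le 1 le_rfl (by push_cast; linarith)
  rw [Finset.filter_true_of_mem (fun n _ => one_dvd n), Nat.cast_one, div_one] at hcard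
  have hPX : 1 ≤ PX * X0 / c := by
    rw [one_le_div hc]
    have h1 : X ^ (-1 : ℝ) ≤ X ^ (-(ε / 50)) := Real.rpow_le_rpow_of_exponent_le (by linarith) (by linarith)
    rw [Real.rpow_neg_one] at h1
    have h2 : c * X⁻¹ ≤ PX := (mul_le_mul_of_nonneg_left h1 hc.le).trans hP
    have h3 : PX * X ≥ c := by
      calc c = c * X⁻¹ * X := by field_simp
        _ ≤ _ := by gcongr
    have h4 : 0 ≤ PX := le_trans (by positivity) h2
    nlinarith
  calc ∑ n ∈ Icc ⌈X⌉₊ ⌊X + Y⌋₊, g n ≤ #(Icc ⌈X⌉₊ ⌊X + Y⌋₊) • (2 * β * X0) := Finset.sum_le_card_nsmul _ _ _ hg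
    _ ≤ (2 * Y) * (2 * β * X0) := by rw [nsmul_eq_mul]; gcongr
    _ ≤ (2 * Y) * (2 * β * X0) * (PX * X0 / c) := le_mul_of_one_le_right (by positivity) hPX
    _ = _ := by ring

theorem shiu_large (α β ε c : ℝ) (hα : 1 ≤ α) (hβ : 1 ≤ β) (hε : 0 < ε) (hε1 : ε < 1) (hc : 0 < c) :
    ∃ C : ℝ, 0 < C ∧ ∀ g : ℕ → ℝ, g 1 = 1 →
    (∀ m n : ℕ, Nat.Coprime m n → g (m * n) = g m * g n) → (∀ n, 0 ≤ g n) →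
    (∀ p : ℕ, p.Prime → ∀ v : ℕ, 1 ≤ v → g (p ^ v) ≤ α ^ v) →
    (∀ n : ℕ, 1 ≤ n → g n ≤ β * (n : ℝ) ^ (ε ^ 3 / 1000)) → ∀ X Y : ℝ, 2 ≤ X → X ^ ε ≤ Y → Y ≤ X → 4 ^ 200 ≤ Y →
    c * X ^ (-(ε / 50)) ≤ ∏ p ∈ (⌊X⌋₊ + 1).primesBelow, (1 + (g p - 1) / (p : ℝ)) →
    ∑ n ∈ Icc ⌈X⌉₊ ⌊X + Y⌋₊, g n ≤ C * Y * ∏ p ∈ (⌊X⌋₊ + 1).primesBelow, (1 + (g p - 1) / (p : ℝ)) := by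
  classical
  obtain ⟨C1, hC1, H1⟩ := shiu_classI α β ε hα hβ hε
  obtain ⟨C4, hC4, y, hy, H4⟩ := shiu_classIV α β ε hα hβ hε
  obtain ⟨C3, hC3, H3⟩ := shiu_classIII y hy
  refine ⟨C1 + 2 * β / c + C3 * β / c + C4, by positivity, fun g h1 hm h0 hp hb X Y hX hXY hYX hY hP => ?_⟩
  have hX0 : 0 < X := by linarith
  have hY0 : 0 < Y := by linarith
  obtain ⟨w, hw, rfl⟩ : ∃ w : ℝ, 4 ≤ w ∧ Y = w ^ 200 := by
    refine ⟨Y ^ (1 / 200 : ℝ), ?_, ?_⟩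
    · calc (4 : ℝ) = ((4 : ℝ) ^ 200) ^ (1 / 200 : ℝ) := by
            rw [← Real.rpow_natCast, ← Real.rpow_mul (by norm_num)]; norm_num
        _ ≤ _ := Real.rpow_le_rpow (by positivity) hY (by norm_num)
    · rw [← Real.rpow_natCast, ← Real.rpow_mul hY0.le]; norm_num
  have hw0 : 0 < w := by linarith
  have hw1 : 1 ≤ w := by linarith
  have hl : ε * Real.log X ≤ 200 * Real.log w := by
    have := Real.log_le_log (by positivity) hXY
    rw [Real.log_rpow hX0, Real.log_pow] at this
    exact_mod_cast this
  have hε3 : ε ^ 3 ≤ ε := by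
    calc ε ^ 3 ≤ ε ^ 1 := pow_le_pow_of_le_one hε.le hε1.le (by norm_num)
      _ = ε := pow_one _
  have hb2 : ∀ n : ℕ, 1 ≤ n → g n ≤ β * (n : ℝ) ^ (1 / 1000 : ℝ) := fun n hn => by
    refine (hb n hn).trans ?_
    apply mul_le_mul_of_nonneg_left _ (by linarith)
    exact Real.rpow_le_rpow_of_exponent_le (by exact_mod_cast hn) (by linarith)
  set PX := ∏ p ∈ (⌊X⌋₊ + 1).primesBelow, (1 + (g p - 1) / (p : ℝ)) with hPX
  have hPX0 : 0 ≤ PX := shiu_prodnn g h0 _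
  set I := Icc ⌈X⌉₊ ⌊X + w ^ 200⌋₊ with hI
  have hg : ∀ n ∈ I, g n ≤ β * w := by
    intro n hn
    obtain ⟨a1, a2⟩ := shiu_memIcc X (w ^ 200) (by positivity) n hn
    have hn1 : (1 : ℝ) ≤ n := by linarith
    refine (hb n (by exact_mod_cast hn1)).trans ?_
    apply mul_le_mul_of_nonneg_left _ (by linarith)
    have hn2 : (n : ℝ) ≤ X ^ 2 := by nlinarith
    calc (n : ℝ) ^ (ε ^ 3 / 1000) ≤ (X ^ 2) ^ (ε ^ 3 / 1000) := Real.rpow_le_rpow (by linarith) hn2 (by positivity)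
      _ = X ^ (2 * (ε ^ 3 / 1000)) := by rw [← Real.rpow_natCast, ← Real.rpow_mul hX0.le]; norm_num
      _ ≤ X ^ (ε * (1 / 200)) := Real.rpow_le_rpow_of_exponent_le (by linarith) (by linarith)
      _ = (X ^ ε) ^ (1 / 200 : ℝ) := by rw [Real.rpow_mul hX0.le]
      _ ≤ (w ^ 200) ^ (1 / 200 : ℝ) := Real.rpow_le_rpow (by positivity) hXY (by norm_num)
      _ = w := by rw [← Real.rpow_natCast, ← Real.rpow_mul hw0.le]; norm_num
  have hone : 1 ≤ PX * w ^ 4 / c := by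
    rw [one_le_div hc]
    have e1 : X ^ (ε / 50) ≤ w ^ 4 := by
      calc X ^ (ε / 50) = (X ^ ε) ^ (1 / 50 : ℝ) := by rw [← Real.rpow_mul hX0.le]; congr 1; ring
        _ ≤ (w ^ 200) ^ (1 / 50 : ℝ) := Real.rpow_le_rpow (by positivity) hXY (by norm_num)
        _ = w ^ 4 := by rw [← Real.rpow_natCast, ← Real.rpow_natCast, ← Real.rpow_mul hw0.le]; norm_num
    calc c = c * X ^ (-(ε / 50)) * X ^ (ε / 50) := by
          rw [mul_assoc, ← Real.rpow_add hX0]; simp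
      _ ≤ PX * w ^ 4 := by gcongr
  let P1 : ℕ → Prop := fun n => (shiuA ⌊w⌋₊ n : ℝ) ≤ w ^ 100
  let P2 : ℕ → Prop := fun n => ∃ q : ℕ, q.Prime ∧ q < ⌊w⌋₊ ∧ w ^ 50 < (q : ℝ) ^ n.factorization q
  let P3 : ℕ → Prop := fun n => ∃ b : ℕ, b ∈ Nat.smoothNumbers y ∧ b ∣ n ∧ w ^ 50 < (b : ℝ) ∧ (b : ℝ) ≤ w ^ 100
  let P4 : ℕ → Prop := fun n => ∃ q : ℕ, q.Prime ∧ y ≤ q ∧ q < ⌊w⌋₊ ∧ w ^ 50 < (shiuA q n : ℝ) ∧ (shiuA q n : ℝ) ≤ w ^ 100 ∧ q ∣ n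
  have hcov : ∀ n, P1 n ∨ P2 n ∨ P3 n ∨ P4 n := by
    intro n
    by_cases hn1 : P1 n
    · exact Or.inl hn1
    right
    obtain ⟨q, hq, hqw, hqz, hzq, hqn⟩ := shiuA_exists (w ^ 100) (one_le_pow₀ hw1) n ⌊w⌋₊ (not_le.1 hn1)
    by_cases hsm : (shiuA q n : ℝ) ≤ w ^ 50
    · left
      refine ⟨q, hq, hqw, ?_⟩
      by_contra hcon
      rw [not_lt] at hcon
      have : (q : ℝ) ^ n.factorization q * shiuA q n ≤ w ^ 50 * w ^ 50 := by gcongr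
      rw [← pow_add] at this
      norm_num at this
      linarith
    · right
      rw [not_le] at hsm
      by_cases hyq : y ≤ q
      · exact Or.inr ⟨q, hq, hyq, hqw, hsm, hqz, hqn⟩
      · exact Or.inl ⟨shiuA q n, Nat.smoothNumbers_mono (by omega) (shiuA_smooth q n), shiuA_dvd q n, hsm, hqz⟩
  have hsum : ∑ n ∈ I, g n ≤ ∑ n ∈ I.filter P1, g n + ∑ n ∈ I.filter P2, g n + ∑ n ∈ I.filter P3, g n + ∑ n ∈ I.filter P4, g n := by
    rw [Finset.sum_filter, Finset.sum_filter, Finset.sum_filter, Finset.sum_filter, ← Finset.sum_add_distrib,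
      ← Finset.sum_add_distrib, ← Finset.sum_add_distrib]
    refine Finset.sum_le_sum fun n _ => ?_
    have hn := h0 n
    rcases hcov n with h | h | h | h <;> rw [if_pos h] <;> split_ifs <;> linarith
  have b1 := H1 g h1 hm h0 hp hb2 X w hX hw hYX hl (I.filter P1) (Finset.filter_subset _ _) (fun n hn => (Finset.mem_filter.1 hn).2)
  have b4 := H4 g h1 hm h0 hp hb2 X w hX hw hYX hl (I.filter P4) (Finset.filter_subset _ _) (fun n hn => (Finset.mem_filter.1 hn).2)
  have c2 := shiu_classII X w hX0.le hw (I.filter P2) (Finset.filter_subset _ _) (fun n hn => (Finset.mem_filter.1 hn).2)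
  have c3 := H3 X w hX0.le hw (I.filter P3) (Finset.filter_subset _ _) (fun n hn => (Finset.mem_filter.1 hn).2)
  have triv : ∀ (D : ℝ) (k : ℕ) (T : Finset ℕ), 0 ≤ D → k ≤ 195 → T ⊆ I → (#T : ℝ) ≤ D * w ^ k →
      ∑ n ∈ T, g n ≤ D * β / c * w ^ 200 * PX := by
    intro D k T hD hk hT hcard
    calc ∑ n ∈ T, g n ≤ #T • (β * w) := Finset.sum_le_card_nsmul _ _ _ fun n hn => hg n (hT hn)
      _ ≤ (D * w ^ k) * (β * w) := by rw [nsmul_eq_mul]; gcongr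
      _ ≤ (D * w ^ k) * (β * w) * (PX * w ^ 4 / c) := le_mul_of_one_le_right (by positivity) hone
      _ = D * β / c * w ^ (k + 5) * PX := by ring
      _ ≤ D * β / c * w ^ 200 * PX := by
        have := pow_le_pow_right₀ hw1 (show k + 5 ≤ 200 by omega)
        gcongr
  have b2 := triv 2 151 _ (by norm_num) (by norm_num) (Finset.filter_subset _ _) c2
  have b3 := triv C3 190 _ hC3.le (by norm_num) (Finset.filter_subset _ _) c3
  calc _ ≤ _ := hsum
    _ ≤ C1 * w ^ 200 * PX + 2 * β / c * w ^ 200 * PX + C3 * β / c * w ^ 200 * PX + C4 * w ^ 200 * PX := by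
        gcongr
    _ = _ := by ring

theorem stmt_2 (α β ε : ℝ) (hα : 1 ≤ α) (hβ : 1 ≤ β) (hε : ε ∈ Set.Ioo (0 : ℝ) 1) :
    ∃ C : ℝ, ∀ g : ℕ → ℝ,
      (g 1 = 1) →
      (∀ m n : ℕ, Nat.Coprime m n → g (m * n) = g m * g n) →
      (∀ n : ℕ, 0 ≤ g n) →
      (∀ p : ℕ, p.Prime → ∀ v : ℕ, 1 ≤ v → g (p ^ v) ≤ α ^ v) →
      (∀ n : ℕ, 1 ≤ n → g n ≤ β * (n : ℝ) ^ (ε ^ 3 / 1000)) →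
      ∀ X Y : ℝ, 2 ≤ X ^ ε → X ^ ε ≤ Y → Y ≤ X →
        (1 / Y) * ∑ n ∈ Finset.Icc ⌈X⌉₊ ⌊X + Y⌋₊, g n
          ≤ C * ∏ p ∈ (Finset.Icc 1 ⌊X⌋₊).filter Nat.Prime, (1 + (g p - 1) / (p : ℝ)) := by
  obtain ⟨hε0, hε1⟩ := hε
  obtain ⟨c, hc, Hc⟩ := shiu_lower (ε / 50) (by positivity)
  obtain ⟨C, hC, H⟩ := shiu_large α β ε c hα hβ hε0 hε1 hc
  refine ⟨C + 4 * β * (((4 : ℝ) ^ 200) ^ (1 / ε)) ^ 2 / c, fun g h1 hm h0 hp hb X Y h2 hXY hYX => ?_⟩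
  have hX : 2 ≤ X := by linarith
  have hY0 : 0 < Y := by linarith
  have hset : (Finset.Icc 1 ⌊X⌋₊).filter Nat.Prime = (⌊X⌋₊ + 1).primesBelow := by
    ext p
    simp only [Finset.mem_filter, Finset.mem_Icc, Nat.mem_primesBelow]
    constructor
    · rintro ⟨⟨a, b⟩, d⟩; exact ⟨by omega, d⟩
    · rintro ⟨a, b⟩; exact ⟨⟨b.one_le, by omega⟩, b⟩
  rw [hset]
  have hP := Hc g h0 X hX
  have hPn := shiu_prodnn g h0 (⌊X⌋₊ + 1)
  set PX := ∏ p ∈ (⌊X⌋₊ + 1).primesBelow, (1 + (g p - 1) / (p : ℝ))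
  set D := 4 * β * (((4 : ℝ) ^ 200) ^ (1 / ε)) ^ 2 / c
  have hD : 0 ≤ D := by positivity
  have hYP : 0 ≤ Y * PX := by positivity
  rw [one_div, inv_mul_le_iff₀ hY0]
  rcases le_total Y (4 ^ 200) with hY | hY
  · have := shiu_small β ε c hβ hε0 hε1 hc g h0 hb X Y (by linarith) hXY hYX hY hP
    refine this.trans ?_
    have : 0 ≤ C * (Y * PX) := by positivity
    change D * Y * PX ≤ _
    linarith
  · refine (H g h1 hm h0 hp hb X Y hX hXY hYX hY hP).trans ?_
    change C * Y * PX ≤ _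
    have : 0 ≤ D * (Y * PX) := by positivity
    linarith
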